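/- arXiv:2206.12620 — 15 statements merged into one kernel-verified Lean document; each statement's English description precedes it below -/
import Mathlib

section
/- Let u0 : [0,∞) → ℝ be nonnegative, right-continuous, of locally bounded variation, and suppose there exists α > 0 with u0(t) ≥ α for all t ∈ [0,α). Then there exists a function ℓ : [0,∞) → ℝ of locally bounded variation satisfying the nonlocal free-boundary equation ℓ(t) = u0(t) + |{ s ∈ [0,t] : ℓ(t−s) > s }| for every t ∈ [0,∞), where |·| denotes one-dimensional Lebesgue measure. -/
open MeasureTheory Set

theorem bv_sub_aux (f g : ℝ → ℝ) (s : Set ℝ) (hf : BoundedVariationOn f s)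
    (hg : BoundedVariationOn g s) : BoundedVariationOn (fun t => f t - g t) s := by
  refine ne_top_of_le_ne_top (ENNReal.add_ne_top.2 ⟨hf, hg⟩) ?_
  apply iSup_le
  rintro ⟨n, u, hu, us⟩
  refine le_trans ?_ (add_le_add (eVariationOn.sum_le (f := f) (n := n) hu us)
    (eVariationOn.sum_le (f := g) (n := n) hu us))
  rw [← Finset.sum_add_distrib]
  refine Finset.sum_le_sum fun i _ => ?_
  simp only [edist_dist]
  rw [← ENNReal.ofReal_add dist_nonneg dist_nonneg]
  exact ENNReal.ofReal_le_ofReal (dist_sub_sub_le _ _ _ _)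

/-- Existence of a solution `ℓ` of locally bounded variation to the
nonlocal free-boundary equation
`ℓ(t) = u0(t) + |{ s ∈ [0,t] : ℓ(t−s) > s }|`, given a nonnegative, right-continuous,
locally BV datum `u0` with `u0 ≥ α > 0` on `[0,α)`. -/
theorem mancala_freeBoundary_existence
    (u0 : ℝ → ℝ)
    (hu0_nonneg : ∀ t ≥ (0 : ℝ), 0 ≤ u0 t)
    (hu0_rc : ∀ t ≥ (0 : ℝ), ContinuousWithinAt u0 (Set.Ici t) t)
    (hu0_bv : ∀ a > (0 : ℝ), BoundedVariationOn u0 (Set.Icc 0 a))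
    (α : ℝ) (hα : 0 < α)
    (hu0_pos : ∀ t ∈ Set.Ico (0 : ℝ) α, α ≤ u0 t) :
    ∃ ℓ : ℝ → ℝ,
      (∀ a > (0 : ℝ), BoundedVariationOn ℓ (Set.Icc 0 a)) ∧
      (∀ t ≥ (0 : ℝ),
        ℓ t = u0 t + (volume {s : ℝ | s ∈ Set.Icc 0 t ∧ ℓ (t - s) > s}).toReal) := by
  classical
  let Φ : (ℝ → ENNReal) →o (ℝ → ENNReal) :=
    { toFun := fun v t => volume {r : ℝ | r ∈ Set.Icc 0 t ∧
        ENNReal.ofReal (t - r) < ENNReal.ofReal (u0 r) + v r}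
      monotone' := by
        intro v w hvw t
        apply measure_mono
        rintro r ⟨hr, h⟩
        exact ⟨hr, h.trans_le (by gcongr; exact hvw r)⟩ }
  obtain ⟨v, hv, hvα⟩ : ∃ v : ℝ → ENNReal, Φ v = v ∧ ∀ t ≥ α, ENNReal.ofReal α ≤ v t := by
    refine ⟨Φ.gfp, Φ.map_gfp, ?_⟩
    have h : (fun t => if α ≤ t then ENNReal.ofReal α else 0) ≤ Φ.gfp := by
      apply Φ.le_gfp
      intro t
      by_cases ht : α ≤ t
      · simp only [ht, if_true]
        calc ENNReal.ofReal α = volume (Set.Ioc (t - α) t) := by simp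
          _ ≤ _ := by
            apply measure_mono
            rintro r ⟨h1, h2⟩
            have hr : 0 ≤ r := by linarith
            refine ⟨⟨hr, h2⟩, ?_⟩
            have h3 : ENNReal.ofReal (t - r) < ENNReal.ofReal α := by
              rw [ENNReal.ofReal_lt_ofReal_iff hα]; linarith
            refine h3.trans_le ?_
            by_cases hrα : α ≤ r
            · simp [hrα]
            · exact le_add_right (ENNReal.ofReal_le_ofReal (hu0_pos r ⟨hr, not_le.1 hrα⟩))
      · simp [ht]
    intro t ht
    have := h t
    simpa [ht.le] using this
  have hfin : ∀ t, v t ≠ ⊤ := by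
    intro t
    rw [← hv]
    change volume _ ≠ ⊤
    refine ne_top_of_le_ne_top ?_ (measure_mono (t := Set.Icc 0 t) ?_)
    · simp
    · rintro r ⟨h, _⟩; exact h
  let l : ℝ → ℝ := fun t => u0 t + (v t).toReal
  have hlα : ∀ t ≥ 0, α ≤ l t := by
    intro t ht
    by_cases h : α ≤ t
    · have h1 := (ENNReal.ofReal_le_iff_le_toReal (hfin t)).1 (hvα t h)
      have h2 := hu0_nonneg t ht
      change α ≤ u0 t + (v t).toReal
      linarith
    · have h1 := hu0_pos t ⟨ht, not_le.1 h⟩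
      have h2 : 0 ≤ (v t).toReal := ENNReal.toReal_nonneg
      change α ≤ u0 t + (v t).toReal
      linarith
  have hvt : ∀ t, v t = volume {r : ℝ | r ∈ Set.Icc 0 t ∧ t < r + l r} := by
    intro t
    conv_lhs => rw [← hv]
    change volume _ = volume _
    congr 1
    ext r
    simp only [mem_ofPred_eq, and_congr_right_iff]
    intro hr
    have : ENNReal.ofReal (u0 r) + v r = ENNReal.ofReal (l r) := by
      change _ = ENNReal.ofReal (u0 r + (v r).toReal)
      rw [ENNReal.ofReal_add (hu0_nonneg r hr.1) ENNReal.toReal_nonneg,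
        ENNReal.ofReal_toReal (hfin r)]
    rw [this, ENNReal.ofReal_lt_ofReal_iff_of_nonneg (by linarith [hr.2])]
    constructor <;> intro h <;> linarith
  have hmeas : ∀ (f : ℝ → ℝ) (a : ℝ), BoundedVariationOn f (Set.Icc 0 a) →
      AEMeasurable f (volume.restrict (Set.Icc 0 a)) := by
    intro f a hf
    obtain ⟨p, q, hp, hq, rfl⟩ := hf.locallyBoundedVariationOn.exists_monotoneOn_sub_monotoneOn
    exact (aemeasurable_restrict_of_monotoneOn measurableSet_Icc hp).sub
      (aemeasurable_restrict_of_monotoneOn measurableSet_Icc hq)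
  have key : ∀ n : ℕ, BoundedVariationOn l (Set.Icc 0 (n * α)) := by
    intro n
    induction n with
    | zero =>
      have : Set.Icc (0:ℝ) ((0:ℕ) * α) = {0} := by simp
      rw [this]
      simp [BoundedVariationOn, eVariationOn.subsingleton]
    | succ n ih =>
      have hm := hmeas l _ ih
      have hpos : 0 < ((n + 1 : ℕ) : ℝ) * α := by positivity
      have hN : ((n + 1 : ℕ) : ℝ) * α = n * α + α := by push_cast; ring
      let B : ℝ → Set ℝ := fun t => {r | r ∈ Set.Icc 0 (n * α) ∧ r + l r ≤ t}
      have hBmeas : ∀ t, NullMeasurableSet (B t) volume := by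
        intro t
        have h1 : NullMeasurableSet {r | r + l r ≤ t} (volume.restrict (Set.Icc 0 (n * α))) :=
          nullMeasurableSet_le (aemeasurable_id.add hm) aemeasurable_const
        have h2 := (nullMeasurableSet_restrict measurableSet_Icc.nullMeasurableSet).1 h1
        convert h2 using 1
        ext r; simp [B, and_comm]
      have hBfin : ∀ t, volume (B t) ≠ ⊤ := fun t =>
        ne_top_of_le_ne_top (by rw [Real.volume_Icc]; exact ENNReal.ofReal_ne_top)
          (measure_mono (t := Set.Icc 0 (n * α)) fun r h => h.1)
      have hEq : ∀ t ∈ Set.Icc 0 (((n + 1 : ℕ) : ℝ) * α),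
          (v t).toReal = t - (volume (B t)).toReal := by
        intro t ht
        have h1 := measure_inter_add_sdiff₀ (μ := volume) (Set.Icc 0 t) (hBmeas t)
        have h2 : Set.Icc 0 t ∩ B t = B t := by
          apply inter_eq_right.2
          rintro r ⟨hr, h⟩
          exact ⟨hr.1, by linarith [hlα r hr.1]⟩
        have h3 : Set.Icc 0 t \ B t = {r : ℝ | r ∈ Set.Icc 0 t ∧ t < r + l r} := by
          ext r
          simp only [mem_sdiff, mem_ofPred_eq, and_congr_right_iff, B, not_and, not_le]
          intro hr
          constructor
          · intro h
            by_contra h'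
            have := hlα r hr.1
            exact h' (h ⟨hr.1, by linarith [ht.2]⟩)
          · intro h _; exact h
        rw [h2, h3, ← hvt] at h1
        have h4 := congrArg ENNReal.toReal h1
        rw [ENNReal.toReal_add (hBfin t) (hfin t)] at h4
        simp [ht.1] at h4
        linarith
      have hmono1 : MonotoneOn (fun t => (volume (B t)).toReal)
          (Set.Icc 0 (((n + 1 : ℕ) : ℝ) * α)) := by
        intro s _ t _ hst
        exact ENNReal.toReal_mono (hBfin t) (measure_mono fun r h => ⟨h.1, h.2.trans hst⟩)
      have hmono2 : MonotoneOn (fun t : ℝ => t) (Set.Icc 0 (((n + 1 : ℕ) : ℝ) * α)) :=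
        fun s _ t _ hst => hst
      have bv : ∀ f : ℝ → ℝ, MonotoneOn f (Set.Icc 0 (((n + 1 : ℕ) : ℝ) * α)) →
          BoundedVariationOn f (Set.Icc 0 (((n + 1 : ℕ) : ℝ) * α)) := by
        intro f hf
        have := hf.locallyBoundedVariationOn 0 (((n + 1 : ℕ) : ℝ) * α)
          ⟨le_rfl, hpos.le⟩ ⟨hpos.le, le_rfl⟩
        simpa using this
      have hbv := bv_sub_aux _ _ _ (hu0_bv _ hpos) (bv_sub_aux _ _ _ (bv _ hmono1) (bv _ hmono2))
      have : eVariationOn l (Set.Icc 0 (((n + 1 : ℕ) : ℝ) * α)) ≠ ⊤ := by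
        rw [eVariationOn.congr (g := fun t => u0 t - ((volume (B t)).toReal - t))]
        · exact hbv
        · intro t ht
          change u0 t + (v t).toReal = u0 t - ((volume (B t)).toReal - t)
          rw [hEq t ht]; ring
      exact this
  refine ⟨l, ?_, ?_⟩
  · intro a ha
    obtain ⟨n, hn⟩ := exists_nat_ge (a / α)
    refine (key n).mono (Set.Icc_subset_Icc_right ?_)
    rwa [div_le_iff₀ hα] at hn
  · intro t ht
    change u0 t + (v t).toReal = _
    rw [hvt t]
    congr 2
    have hp := (Measure.measurePreserving_sub_left (volume : Measure ℝ) t).measure_preimage_emb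
      (MeasurableEquiv.subLeft t).measurableEmbedding {r : ℝ | r ∈ Set.Icc 0 t ∧ t < r + l r}
    rw [← hp]
    congr 1
    ext s
    simp only [mem_preimage, mem_ofPred_eq, mem_Icc]
    constructor
    · rintro ⟨⟨h1, h2⟩, h3⟩
      exact ⟨⟨by linarith, by linarith⟩, by linarith⟩
    · rintro ⟨⟨h1, h2⟩, h3⟩
      exact ⟨⟨by linarith, by linarith⟩, by linarith⟩
end

section
/- Let u0 : [0,∞) → ℝ be nonnegative, right-continuous, of locally bounded variation, and suppose there exists α > 0 with u0(t) ≥ α for all t ∈ [0,α). If ℓ₁ and ℓ₂ are two functions of locally bounded variation on [0,∞) both satisfying the nonlocal free-boundary equation ℓ(t) = u0(t) + |{ s ∈ [0,t] : ℓ(t−s) > s }| for every t ∈ [0,∞), then ℓ₁ = ℓ₂. -/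
open MeasureTheory Set

lemma manc_refl (ℓ : ℝ → ℝ) (t : ℝ) :
    volume {s : ℝ | s ∈ Set.Icc 0 t ∧ ℓ (t - s) > s}
      = volume {r : ℝ | r ∈ Set.Icc 0 t ∧ t < r + ℓ r} := by
  have h := (Measure.measurePreserving_sub_left (volume : Measure ℝ) t).measure_preimage_emb
    (MeasurableEquiv.subLeft t).measurableEmbedding {r : ℝ | r ∈ Set.Icc 0 t ∧ t < r + ℓ r}
  rw [← h]
  congr 1
  ext s
  simp only [mem_setOf_eq, mem_preimage, mem_Icc]
  constructor
  · rintro ⟨⟨h1, h2⟩, h3⟩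
    exact ⟨⟨by linarith, by linarith⟩, by linarith⟩
  · rintro ⟨⟨h1, h2⟩, h3⟩
    exact ⟨⟨by linarith, by linarith⟩, by linarith⟩

lemma manc_fin (ℓ : ℝ → ℝ) (t : ℝ) :
    volume {r : ℝ | r ∈ Set.Icc 0 t ∧ t < r + ℓ r} ≠ ⊤ := by
  refine ne_top_of_le_ne_top ?_ (measure_mono (t := Icc 0 t) (fun r hr => hr.1))
  simp

lemma manc_nonzero (u0 ℓ : ℝ → ℝ)
    (hu0_nonneg : ∀ t ≥ (0 : ℝ), 0 ≤ u0 t)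
    (α : ℝ) (hα : 0 < α)
    (hu0_pos : ∀ t ∈ Set.Ico (0 : ℝ) α, α ≤ u0 t)
    (hbv : ∀ a > (0 : ℝ), BoundedVariationOn ℓ (Set.Icc 0 a))
    (hℓ : ∀ t ≥ (0 : ℝ),
      ℓ t = u0 t + (volume {r : ℝ | r ∈ Set.Icc 0 t ∧ t < r + ℓ r}).toReal)
    (T : ℝ) (hT : α ≤ T)
    (h0 : volume {r : ℝ | r ∈ Set.Icc 0 T ∧ T < r + ℓ r} = 0) : False := by
  have hT0 : 0 < T := by linarith
  have hae : AEMeasurable ℓ (volume.restrict (Icc 0 T)) := by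
    obtain ⟨p, q, hp, hq, hpq⟩ :=
      (hbv T hT0).locallyBoundedVariationOn.exists_monotoneOn_sub_monotoneOn
    rw [hpq]
    exact (aemeasurable_restrict_of_monotoneOn measurableSet_Icc hp).sub
      (aemeasurable_restrict_of_monotoneOn measurableSet_Icc hq)
  obtain ⟨g, hg, hgl⟩ := hae
  have hgl' : ∀ᵐ r, r ∈ Icc 0 T → ℓ r = g r := (ae_restrict_iff' measurableSet_Icc).1 hgl
  have h0' : ∀ᵐ r, r ∈ Icc 0 T → r + ℓ r ≤ T := by
    have : ∀ᵐ r, ¬ (r ∈ Icc 0 T ∧ T < r + ℓ r) := by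
      rw [ae_iff]; simpa only [not_not] using h0
    filter_upwards [this] with r hr hr1
    by_contra hc
    exact hr ⟨hr1, not_le.1 hc⟩
  have hnn : ∀ t ≥ 0, 0 ≤ ℓ t := fun t ht => by
    rw [hℓ t ht]; have := hu0_nonneg t ht; positivity
  let S : Set (ℝ × ℝ) := {p | (0 ≤ p.2 ∧ p.2 ≤ p.1) ∧ (p.1 ≤ T ∧ p.1 < p.2 + g p.2)}
  have hS : MeasurableSet S := by
    refine ((measurableSet_le measurable_const measurable_snd).inter
      (measurableSet_le measurable_snd measurable_fst)).inter
      ((measurableSet_le measurable_fst measurable_const).inter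
      (measurableSet_lt measurable_fst (measurable_snd.add (hg.comp measurable_snd))))
  have e1 := Measure.prod_apply (μ := (volume : Measure ℝ)) (ν := (volume : Measure ℝ)) hS
  have e2 := Measure.prod_apply_symm (μ := (volume : Measure ℝ)) (ν := (volume : Measure ℝ)) hS
  have hm : Measurable fun t => volume (Prod.mk t ⁻¹' S) :=
    measurable_measure_prodMk_left hS
  have s1 : ∀ t ∈ Icc 0 T, volume (Prod.mk t ⁻¹' S)
      = volume {r : ℝ | r ∈ Set.Icc 0 t ∧ t < r + ℓ r} := by
    intro t ht
    apply measure_congr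
    filter_upwards [hgl'] with r hr
    apply propext
    change ((0 ≤ r ∧ r ≤ t) ∧ (t ≤ T ∧ t < r + g r)) ↔ ((0 ≤ r ∧ r ≤ t) ∧ t < r + ℓ r)
    constructor
    · rintro ⟨h1, h2, h3⟩
      rw [hr ⟨h1.1, h1.2.trans ht.2⟩]; exact ⟨h1, h3⟩
    · rintro ⟨h1, h3⟩
      rw [hr ⟨h1.1, h1.2.trans ht.2⟩] at h3; exact ⟨h1, ht.2, h3⟩
  have s2 : ∀ᵐ r, volume ((fun t => (t, r)) ⁻¹' S)
      = (Icc 0 T).indicator (fun r => ENNReal.ofReal (ℓ r)) r := by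
    filter_upwards [hgl', h0'] with r hr hr2
    by_cases h : r ∈ Icc 0 T
    · rw [indicator_of_mem h]
      have : (fun t => (t, r)) ⁻¹' S = Ico r (r + ℓ r) := by
        ext t
        change ((0 ≤ r ∧ r ≤ t) ∧ (t ≤ T ∧ t < r + g r)) ↔ (r ≤ t ∧ t < r + ℓ r)
        rw [← hr h]
        have := hr2 h
        have := h.1
        constructor
        · rintro ⟨h1, h2, h3⟩; exact ⟨h1.2, h3⟩
        · rintro ⟨h1, h3⟩; exact ⟨⟨by linarith, h1⟩, by linarith, h3⟩
      rw [this, Real.volume_Ico]; congr 1; ring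
    · rw [indicator_of_notMem h]
      have : (fun t => (t, r)) ⁻¹' S = ∅ := by
        ext t
        change ((0 ≤ r ∧ r ≤ t) ∧ (t ≤ T ∧ t < r + g r)) ↔ False
        simp only [iff_false]
        rintro ⟨h1, h2, h3⟩
        exact h ⟨h1.1, h1.2.trans h2⟩
      rw [this]; simp
  have e3 : ∫⁻ t, volume (Prod.mk t ⁻¹' S) = ∫⁻ r in Icc 0 T, ENNReal.ofReal (ℓ r) := by
    rw [← e1, e2, lintegral_congr_ae s2, lintegral_indicator measurableSet_Icc]
  have e4 : ∫⁻ r in Icc 0 T, ENNReal.ofReal (ℓ r)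
      = (∫⁻ r in Icc 0 T, ENNReal.ofReal (u0 r)) + ∫⁻ t in Icc 0 T, volume (Prod.mk t ⁻¹' S) := by
    rw [← lintegral_add_right _ hm]
    apply setLIntegral_congr_fun measurableSet_Icc
    intro t ht
    simp only
    rw [s1 t ht, hℓ t ht.1, ENNReal.ofReal_add (hu0_nonneg t ht.1) ENNReal.toReal_nonneg,
      ENNReal.ofReal_toReal (manc_fin ℓ t)]
  have e5 : ∫⁻ t in Icc 0 T, volume (Prod.mk t ⁻¹' S) = ∫⁻ t, volume (Prod.mk t ⁻¹' S) := by
    apply setLIntegral_eq_of_support_subset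
    intro t ht
    by_contra hc
    apply ht
    have : Prod.mk t ⁻¹' S = ∅ := by
      ext r
      change ((0 ≤ r ∧ r ≤ t) ∧ (t ≤ T ∧ t < r + g r)) ↔ False
      simp only [iff_false]
      rintro ⟨h1, h2, h3⟩
      exact hc ⟨h1.1.trans h1.2, h2⟩
    change volume (Prod.mk t ⁻¹' S) = 0
    rw [this]; simp
  have hfin : ∫⁻ r in Icc 0 T, ENNReal.ofReal (ℓ r) ≠ ⊤ := by
    have : ∫⁻ r in Icc 0 T, ENNReal.ofReal (ℓ r) ≤ ∫⁻ r in Icc 0 T, ENNReal.ofReal T := by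
      apply lintegral_mono_ae
      rw [ae_restrict_iff' measurableSet_Icc]
      filter_upwards [h0'] with r hr h
      apply ENNReal.ofReal_le_ofReal
      linarith [hr h, h.1]
    refine ne_top_of_le_ne_top ?_ this
    simp [ENNReal.mul_eq_top]
  have hz : ∫⁻ r in Icc 0 T, ENNReal.ofReal (u0 r) = 0 := by
    rw [e5, e3] at e4
    by_contra hc
    rw [add_comm] at e4
    exact absurd e4 (ENNReal.lt_add_right hfin hc).ne
  have hp : ∫⁻ r in Ico 0 α, ENNReal.ofReal α ≤ ∫⁻ r in Icc 0 T, ENNReal.ofReal (u0 r) := by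
    calc _ ≤ ∫⁻ r in Ico 0 α, ENNReal.ofReal (u0 r) :=
          setLIntegral_mono' measurableSet_Ico
            (fun r hr => ENNReal.ofReal_le_ofReal (hu0_pos r hr))
      _ ≤ _ := lintegral_mono_set (fun r (hr : r ∈ Ico 0 α) => show r ∈ Icc 0 T from ⟨hr.1, hr.2.le.trans hT⟩)
  rw [hz] at hp
  simp at hp
  linarith

lemma manc_pos (u0 ℓ : ℝ → ℝ)
    (hu0_nonneg : ∀ t ≥ (0 : ℝ), 0 ≤ u0 t)
    (α : ℝ) (hα : 0 < α)
    (hu0_pos : ∀ t ∈ Set.Ico (0 : ℝ) α, α ≤ u0 t)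
    (hbv : ∀ a > (0 : ℝ), BoundedVariationOn ℓ (Set.Icc 0 a))
    (hℓ' : ∀ t ≥ (0 : ℝ),
      ℓ t = u0 t + (volume {s : ℝ | s ∈ Set.Icc 0 t ∧ ℓ (t - s) > s}).toReal)
    (T : ℝ) (hT : 0 ≤ T) : ∃ δ > 0, ∀ t, T ≤ t → t < T + δ → δ ≤ ℓ t := by
  have hℓ : ∀ t ≥ (0 : ℝ),
      ℓ t = u0 t + (volume {r : ℝ | r ∈ Set.Icc 0 t ∧ t < r + ℓ r}).toReal := by
    intro t ht; rw [hℓ' t ht, manc_refl]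
  rcases lt_or_ge T α with h | h
  · refine ⟨min α (α - T), by simp [hα, h], fun t h1 h2 => ?_⟩
    have h3 : t < α := by linarith [min_le_right α (α - T)]
    rw [hℓ t (by linarith)]
    have := hu0_pos t ⟨by linarith, h3⟩
    have h5 : 0 ≤ (volume {r : ℝ | r ∈ Set.Icc 0 t ∧ t < r + ℓ r}).toReal :=
      ENNReal.toReal_nonneg
    linarith [min_le_left α (α - T)]
  · have hne := manc_nonzero u0 ℓ hu0_nonneg α hα hu0_pos hbv hℓ T h
    have hU : {r : ℝ | r ∈ Set.Icc 0 T ∧ T < r + ℓ r}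
        ⊆ ⋃ n : ℕ, {r : ℝ | r ∈ Set.Icc 0 T ∧ T + 1 / ((n : ℝ) + 1) < r + ℓ r} := by
      intro r hr
      obtain ⟨n, hn⟩ := exists_nat_one_div_lt (sub_pos.2 hr.2)
      exact mem_iUnion.2 ⟨n, hr.1, by linarith⟩
    obtain ⟨n, hn⟩ : ∃ n : ℕ,
        volume {r : ℝ | r ∈ Set.Icc 0 T ∧ T + 1 / ((n : ℝ) + 1) < r + ℓ r} ≠ 0 := by
      by_contra! hc
      exact hne (measure_mono_null hU (measure_iUnion_null hc))
    have hfin : volume {r : ℝ | r ∈ Set.Icc 0 T ∧ T + 1 / ((n : ℝ) + 1) < r + ℓ r} ≠ ⊤ := by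
      refine ne_top_of_le_ne_top ?_ (measure_mono (t := Icc 0 T) (fun r hr => hr.1))
      simp
    have hc := ENNReal.toReal_pos hn hfin
    have hn1 : 0 < 1 / ((n : ℝ) + 1) := by positivity
    refine ⟨min _ (1 / ((n : ℝ) + 1)), lt_min hc hn1, fun t h1 h2 => ?_⟩
    refine (min_le_left _ _).trans ?_
    rw [hℓ t (by linarith)]
    have hsub := measure_mono (μ := volume) (s := {r : ℝ | r ∈ Set.Icc 0 T ∧ T + 1 / ((n : ℝ) + 1) < r + ℓ r})
      (t := {r : ℝ | r ∈ Set.Icc 0 t ∧ t < r + ℓ r}) (by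
        rintro r ⟨hr1, hr2⟩
        refine ⟨⟨hr1.1, hr1.2.trans h1⟩, ?_⟩
        have := h2.trans_le (add_le_add_right (min_le_right _ _) T)
        linarith)
    have := ENNReal.toReal_mono (manc_fin ℓ t) hsub
    linarith [hu0_nonneg t (by linarith)]

/-- Uniqueness of locally-BV solutions of the nonlocal free-boundary
equation, provided `u0 ≥ α > 0` on `[0,α)`. -/
theorem mancala_freeBoundary_uniqueness
    (u0 : ℝ → ℝ)
    (hu0_nonneg : ∀ t ≥ (0 : ℝ), 0 ≤ u0 t)
    (hu0_rc : ∀ t ≥ (0 : ℝ), ContinuousWithinAt u0 (Set.Ici t) t)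
    (hu0_bv : ∀ a > (0 : ℝ), BoundedVariationOn u0 (Set.Icc 0 a))
    (α : ℝ) (hα : 0 < α)
    (hu0_pos : ∀ t ∈ Set.Ico (0 : ℝ) α, α ≤ u0 t)
    (ℓ₁ ℓ₂ : ℝ → ℝ)
    (hℓ₁_bv : ∀ a > (0 : ℝ), BoundedVariationOn ℓ₁ (Set.Icc 0 a))
    (hℓ₂_bv : ∀ a > (0 : ℝ), BoundedVariationOn ℓ₂ (Set.Icc 0 a))
    (hℓ₁ : ∀ t ≥ (0 : ℝ),
      ℓ₁ t = u0 t + (volume {s : ℝ | s ∈ Set.Icc 0 t ∧ ℓ₁ (t - s) > s}).toReal)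
    (hℓ₂ : ∀ t ≥ (0 : ℝ),
      ℓ₂ t = u0 t + (volume {s : ℝ | s ∈ Set.Icc 0 t ∧ ℓ₂ (t - s) > s}).toReal) :
    ∀ t ≥ (0 : ℝ), ℓ₁ t = ℓ₂ t := by
  by_contra! hcon
  let B : Set ℝ := {t | 0 ≤ t ∧ ℓ₁ t ≠ ℓ₂ t}
  have hBne : B.Nonempty := by
    obtain ⟨t, h1, h2⟩ := hcon
    exact ⟨t, h1, h2⟩
  have hBb : BddBelow B := ⟨0, fun t ht => ht.1⟩
  have hT : 0 ≤ sInf B := le_csInf hBne fun t ht => ht.1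
  obtain ⟨δ₁, hδ₁, h1⟩ := manc_pos u0 ℓ₁ hu0_nonneg α hα hu0_pos hℓ₁_bv hℓ₁ _ hT
  obtain ⟨δ₂, hδ₂, h2⟩ := manc_pos u0 ℓ₂ hu0_nonneg α hα hu0_pos hℓ₂_bv hℓ₂ _ hT
  obtain ⟨t, htB, ht⟩ := exists_lt_of_csInf_lt hBne
    (show sInf B < sInf B + min δ₁ δ₂ by linarith [lt_min hδ₁ hδ₂])
  have hTt : sInf B ≤ t := csInf_le hBb htB
  have m1 := min_le_left δ₁ δ₂
  have m2 := min_le_right δ₁ δ₂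
  apply htB.2
  rw [hℓ₁ t htB.1, hℓ₂ t htB.1]
  congr 3
  ext s
  simp only [mem_setOf_eq]
  apply and_congr_right
  intro hs
  rcases lt_or_ge (t - s) (sInf B) with hlt | hge
  · have : ℓ₁ (t - s) = ℓ₂ (t - s) := by
      by_contra hc
      exact notMem_of_lt_csInf hlt hBb ⟨by linarith [hs.2], hc⟩
    rw [this]
  · have a1 := h1 (t - s) hge (by linarith [hs.1])
    have a2 := h2 (t - s) hge (by linarith [hs.1])
    exact ⟨fun _ => by linarith, fun _ => by linarith⟩
end

section
/- Let u0 : [0,∞) → ℝ be nonnegative, right-continuous, of locally bounded variation, and suppose there exists α > 0 with u0(t) ≥ α for all t ∈ [0,α). If ℓ : [0,∞) → ℝ satisfies the nonlocal free-boundary equation ℓ(t) = u0(t) + |{ s ∈ [0,t] : ℓ(t−s) > s }| for every t ∈ [0,∞), then ℓ(t) ≥ α for all t ∈ [0,∞). -/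
open MeasureTheory Set

/-- Lower bound: any solution of the nonlocal free-boundary equation
with datum `u0 ≥ α > 0` on `[0,α)` satisfies `ℓ(t) ≥ α` for all `t ≥ 0`. -/
theorem mancala_freeBoundary_lowerBound
    (u0 : ℝ → ℝ)
    (hu0_nonneg : ∀ t ≥ (0 : ℝ), 0 ≤ u0 t)
    (hu0_rc : ∀ t ≥ (0 : ℝ), ContinuousWithinAt u0 (Set.Ici t) t)
    (hu0_bv : ∀ a > (0 : ℝ), BoundedVariationOn u0 (Set.Icc 0 a))
    (α : ℝ) (hα : 0 < α)
    (hu0_pos : ∀ t ∈ Set.Ico (0 : ℝ) α, α ≤ u0 t)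
    (ℓ : ℝ → ℝ)
    (hℓ : ∀ t ≥ (0 : ℝ),
      ℓ t = u0 t + (volume {s : ℝ | s ∈ Set.Icc 0 t ∧ ℓ (t - s) > s}).toReal) :
    ∀ t ≥ (0 : ℝ), α ≤ ℓ t := by
  have key : ∀ t ≥ (0 : ℝ), ∀ a b : ℝ, a ≤ b →
      (∀ s ∈ Set.Ioo a b, s ∈ Set.Icc 0 t ∧ ℓ (t - s) > s) → b - a ≤ ℓ t := by
    intro t ht a b hab h
    have hfin : volume {s : ℝ | s ∈ Set.Icc 0 t ∧ ℓ (t - s) > s} ≠ ⊤ :=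
      ne_top_of_le_ne_top (by simp : volume (Set.Icc 0 t) ≠ ⊤)
        (measure_mono (fun s hs => hs.1))
    have h1 := ENNReal.toReal_mono hfin (measure_mono (μ := volume) (s := Set.Ioo a b) h)
    rw [Real.volume_Ioo, ENNReal.toReal_ofReal (by linarith)] at h1
    rw [hℓ t ht]
    linarith [hu0_nonneg t ht]
  have ind : ∀ n : ℕ, ∀ t ≥ (0 : ℝ), t < (n + 1) * α → α ≤ ℓ t := by
    intro n
    induction n with
    | zero =>
      intro t ht h
      rw [hℓ t ht]
      have := hu0_pos t ⟨ht, by simpa using h⟩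
      have h2 : 0 ≤ (volume {s : ℝ | s ∈ Set.Icc 0 t ∧ ℓ (t - s) > s}).toReal :=
        ENNReal.toReal_nonneg
      linarith
    | succ n ih =>
      push_cast
      obtain ⟨T, hT⟩ : ∃ T : ℝ, T = (n + 1) * α := ⟨_, rfl⟩
      have hTα : α ≤ T := by
        rw [hT]
        nlinarith [(Nat.cast_nonneg n : (0 : ℝ) ≤ n)]
      have hT2 : ((n : ℝ) + 1 + 1) * α = T + α := by rw [hT]; ring
      rw [hT2]
      rw [← hT] at ih
      have step : ∀ t, T ≤ t → t < T + α → α - (t - T) ≤ ℓ t := by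
        intro t h1 h2
        refine key t (by linarith) (t - T) α (by linarith) ?_
        rintro s ⟨hs1, hs2⟩
        refine ⟨⟨by linarith, by linarith⟩, ?_⟩
        have := ih (t - s) (by linarith) (by linarith)
        linarith
      intro t ht h
      rcases lt_or_ge t T with h1 | h1
      · exact ih t ht h1
      · have := key t ht 0 α hα.le ?_
        · linarith
        rintro s ⟨hs1, hs2⟩
        refine ⟨⟨by linarith, by linarith⟩, ?_⟩
        rcases lt_or_ge (t - s) T with h3 | h3
        · have := ih (t - s) (by linarith) h3
          linarith
        · have := step (t - s) h3 (by linarith)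
          linarith
  intro t ht
  obtain ⟨n, hn⟩ := exists_nat_gt (t / α)
  refine ind n t ht ?_
  rw [div_lt_iff₀ hα] at hn
  linarith
end

section
/- Let u0 : [0,∞) → ℝ be nonnegative, right-continuous, of locally bounded variation, bounded with supremum ‖u0‖_∞, and suppose there exists α > 0 with u0(t) ≥ α for all t ∈ [0,α). If ℓ : [0,∞) → ℝ satisfies the nonlocal free-boundary equation ℓ(t) = u0(t) + |{ s ∈ [0,t] : ℓ(t−s) > s }| for every t ∈ [0,∞), then ℓ(t) ≤ ‖u0‖_∞ + t for all t ∈ [0,∞), and moreover ℓ(t) = u0(t) + t for every t ∈ [0,α). -/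
open MeasureTheory Set

/-- Upper bound `ℓ(t) ≤ ‖u0‖_∞ + t` and the explicit formula
`ℓ(t) = u0(t) + t` on `[0,α)`, for any solution of the nonlocal free-boundary
equation with bounded datum `u0` satisfying `u0 ≥ α > 0` on `[0,α)`.
Here `Msup` is the supremum of `u0` over `[0,∞)`. -/
theorem mancala_freeBoundary_upperBound_and_initial_formula
    (u0 : ℝ → ℝ)
    (hu0_nonneg : ∀ t ≥ (0 : ℝ), 0 ≤ u0 t)
    (hu0_rc : ∀ t ≥ (0 : ℝ), ContinuousWithinAt u0 (Set.Ici t) t)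
    (hu0_bv : ∀ a > (0 : ℝ), BoundedVariationOn u0 (Set.Icc 0 a))
    (Msup : ℝ)
    (hMsup : IsLUB (u0 '' Set.Ici (0 : ℝ)) Msup)
    (α : ℝ) (hα : 0 < α)
    (hu0_pos : ∀ t ∈ Set.Ico (0 : ℝ) α, α ≤ u0 t)
    (ℓ : ℝ → ℝ)
    (hℓ : ∀ t ≥ (0 : ℝ),
      ℓ t = u0 t + (volume {s : ℝ | s ∈ Set.Icc 0 t ∧ ℓ (t - s) > s}).toReal) :
    (∀ t ≥ (0 : ℝ), ℓ t ≤ Msup + t) ∧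
    (∀ t ∈ Set.Ico (0 : ℝ) α, ℓ t = u0 t + t) := by
  constructor
  · intro t ht
    have h1 : u0 t ≤ Msup := hMsup.1 ⟨t, ht, rfl⟩
    have h2 : volume {s : ℝ | s ∈ Set.Icc 0 t ∧ ℓ (t - s) > s} ≤ ENNReal.ofReal t := by
      calc volume {s : ℝ | s ∈ Set.Icc 0 t ∧ ℓ (t - s) > s} ≤ volume (Set.Icc 0 t) :=
            measure_mono (fun s hs => hs.1)
        _ = ENNReal.ofReal t := by rw [Real.volume_Icc, sub_zero]
    have h3 := ENNReal.toReal_le_of_le_ofReal ht h2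
    rw [hℓ t ht]
    linarith
  · intro t ht
    have hset : {s : ℝ | s ∈ Set.Icc 0 t ∧ ℓ (t - s) > s} = Set.Icc 0 t := by
      ext s
      refine ⟨fun h => h.1, fun h => ⟨h, ?_⟩⟩
      have h0 : 0 ≤ t - s := by linarith [h.2]
      have h1 : α ≤ u0 (t - s) := hu0_pos _ ⟨h0, by linarith [h.1, ht.2]⟩
      have h2 : 0 ≤ (volume {r : ℝ | r ∈ Set.Icc 0 (t - s) ∧ ℓ (t - s - r) > r}).toReal :=
        ENNReal.toReal_nonneg
      have h3 := hℓ (t - s) h0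
      have h4 := h.2
      have h5 := ht.2
      change s < ℓ (t - s)
      linarith
    rw [hℓ t ht.1, hset, Real.volume_Icc, sub_zero, ENNReal.toReal_ofReal ht.1]
end

section
/- Let u0 : [0,∞) → ℝ be nonnegative, right-continuous, of locally bounded variation, and suppose there exists α > 0 with u0(t) ≥ α for all t ∈ [0,α). If ℓ : [0,∞) → ℝ satisfies the nonlocal free-boundary equation ℓ(t) = u0(t) + |{ s ∈ [0,t] : ℓ(t−s) > s }| for every t ∈ [0,∞), then ℓ satisfies the one-sided Lipschitz condition ℓ(t+τ) − ℓ(t) ≤ u0(t+τ) − u0(t) + τ for every t > 0 and every τ ≥ 0. -/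
open MeasureTheory Set

/-- One-sided Lipschitz condition
`ℓ(t+τ) − ℓ(t) ≤ u0(t+τ) − u0(t) + τ` for `t > 0`, `τ ≥ 0`, for any solution of
the nonlocal free-boundary equation. -/
theorem mancala_freeBoundary_oneSided_Lipschitz
    (u0 : ℝ → ℝ)
    (hu0_nonneg : ∀ t ≥ (0 : ℝ), 0 ≤ u0 t)
    (hu0_rc : ∀ t ≥ (0 : ℝ), ContinuousWithinAt u0 (Set.Ici t) t)
    (hu0_bv : ∀ a > (0 : ℝ), BoundedVariationOn u0 (Set.Icc 0 a))
    (α : ℝ) (hα : 0 < α)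
    (hu0_pos : ∀ t ∈ Set.Ico (0 : ℝ) α, α ≤ u0 t)
    (ℓ : ℝ → ℝ)
    (hℓ : ∀ t ≥ (0 : ℝ),
      ℓ t = u0 t + (volume {s : ℝ | s ∈ Set.Icc 0 t ∧ ℓ (t - s) > s}).toReal) :
    ∀ t > (0 : ℝ), ∀ τ ≥ (0 : ℝ),
      ℓ (t + τ) - ℓ t ≤ u0 (t + τ) - u0 t + τ := by
  intro t ht τ hτ
  have h1 := hℓ t ht.le
  have h2 := hℓ (t + τ) (by linarith)
  set S : Set ℝ := {s : ℝ | s ∈ Set.Icc 0 t ∧ ℓ (t - s) > s} with hS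
  set S' : Set ℝ := {s : ℝ | s ∈ Set.Icc 0 (t + τ) ∧ ℓ (t + τ - s) > s} with hS'
  have hsub : S' ⊆ Set.Icc 0 τ ∪ (fun x => x + -τ) ⁻¹' S := by
    rintro s ⟨⟨hs0, hs1⟩, hs2⟩
    by_cases h : s ≤ τ
    · exact Or.inl ⟨hs0, h⟩
    · right
      push Not at h
      refine ⟨⟨by linarith, by linarith⟩, ?_⟩
      have e : t - (s + -τ) = t + τ - s := by ring
      rw [e]
      linarith
  have hfin : volume S ≠ ⊤ := by
    have hle : volume S ≤ volume (Set.Icc 0 t) := measure_mono (fun s hs => hs.1)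
    exact ne_top_of_le_ne_top (by simp) hle
  have hle : volume S' ≤ ENNReal.ofReal τ + volume S := by
    calc volume S' ≤ volume (Set.Icc 0 τ ∪ (fun x => x + -τ) ⁻¹' S) := measure_mono hsub
      _ ≤ volume (Set.Icc 0 τ) + volume ((fun x => x + -τ) ⁻¹' S) := measure_union_le _ _
      _ = ENNReal.ofReal τ + volume S := by
        rw [measure_preimage_add_right, Real.volume_Icc, sub_zero]
  have hr : (volume S').toReal ≤ τ + (volume S).toReal := by
    have := ENNReal.toReal_mono (ENNReal.add_ne_top.2 ⟨ENNReal.ofReal_ne_top, hfin⟩) hle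
    rwa [ENNReal.toReal_add ENNReal.ofReal_ne_top hfin, ENNReal.toReal_ofReal hτ] at this
  linarith
end

section
/- Let u0 : [0,∞) → ℝ be nonnegative, right-continuous, of locally bounded variation, and suppose there exists α > 0 with u0(t) ≥ α for all t ∈ [0,α). Then a function ℓ : [0,∞) → ℝ of locally bounded variation satisfies the nonlocal free-boundary equation ℓ(t) = u0(t) + |{ s ∈ [0,t] : ℓ(t−s) > s }| for every t ∈ [0,∞) if and only if ℓ(t) = u0(t) + t for every t ∈ [0,α) and ℓ(t) = u0(t) + α + |{ s ∈ [α,t] : ℓ(t−s) > s }| for every t ∈ [α,∞). -/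
open MeasureTheory Set

lemma mancala_fin (ℓ : ℝ → ℝ) (a t : ℝ) :
    volume {s : ℝ | s ∈ Set.Icc a t ∧ ℓ (t - s) > s} ≠ ⊤ :=
  ne_top_of_le_ne_top (b := volume (Set.Icc a t)) (by simp)
    (measure_mono (fun _ h => h.1))

lemma mancala_small (ℓ : ℝ → ℝ) (α : ℝ) (t : ℝ) (ht : t ∈ Set.Ico 0 α)
    (h : ∀ r, 0 ≤ r → r ≤ t → α ≤ ℓ r) :
    (volume {s : ℝ | s ∈ Set.Icc 0 t ∧ ℓ (t - s) > s}).toReal = t := by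
  have : {s : ℝ | s ∈ Set.Icc 0 t ∧ ℓ (t - s) > s} = Set.Icc 0 t := by
    ext s
    simp only [Set.mem_setOf_eq, and_iff_left_iff_imp]
    intro hs
    have := h (t - s) (by linarith [hs.2]) (by linarith [hs.1])
    linarith [hs.2, ht.2]
  rw [this]
  simp [ht.1]

lemma mancala_large (ℓ : ℝ → ℝ) (α : ℝ) (hα : 0 < α) (t : ℝ) (ht : α ≤ t)
    (h : ∀ r, 0 ≤ r → α ≤ ℓ r) :
    (volume {s : ℝ | s ∈ Set.Icc 0 t ∧ ℓ (t - s) > s}).toReal =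
      α + (volume {s : ℝ | s ∈ Set.Icc α t ∧ ℓ (t - s) > s}).toReal := by
  have : {s : ℝ | s ∈ Set.Icc 0 t ∧ ℓ (t - s) > s} =
      {s : ℝ | s ∈ Set.Icc α t ∧ ℓ (t - s) > s} ∪ Set.Ico 0 α := by
    ext s
    simp only [Set.mem_setOf_eq, Set.mem_union, Set.mem_Icc, Set.mem_Ico]
    constructor
    · rintro ⟨⟨h0, h1⟩, h2⟩
      rcases lt_or_ge s α with h3 | h3
      · exact Or.inr ⟨h0, h3⟩
      · exact Or.inl ⟨⟨h3, h1⟩, h2⟩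
    · rintro (⟨⟨h0, h1⟩, h2⟩ | ⟨h0, h1⟩)
      · exact ⟨⟨by linarith, h1⟩, h2⟩
      · have := h (t - s) (by linarith)
        exact ⟨⟨h0, by linarith⟩, by linarith⟩
  rw [this, measure_union _ measurableSet_Ico,
    ENNReal.toReal_add (mancala_fin ℓ α t) (by simp)]
  · simp [hα.le, add_comm]
  · rw [Set.disjoint_left]
    rintro s ⟨⟨h0, _⟩, _⟩ h1
    exact absurd h1.2 (not_lt.mpr h0)

lemma mancala_lower (ℓ : ℝ → ℝ) (t b : ℝ) (hb : 0 ≤ b)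
    (h : ∀ s, 0 ≤ s → s < b → s ≤ t ∧ ℓ (t - s) > s) :
    b ≤ (volume {s : ℝ | s ∈ Set.Icc 0 t ∧ ℓ (t - s) > s}).toReal := by
  have h1 : volume (Set.Ico 0 b) ≤ volume {s : ℝ | s ∈ Set.Icc 0 t ∧ ℓ (t - s) > s} :=
    measure_mono (fun s hs => ⟨⟨hs.1, (h s hs.1 hs.2).1⟩, (h s hs.1 hs.2).2⟩)
  have h2 := ENNReal.toReal_mono (mancala_fin ℓ 0 t) h1
  simpa [hb] using h2

lemma mancala_lower' (ℓ : ℝ → ℝ) (t a b : ℝ) (ha : 0 ≤ a) (hb : a ≤ b)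
    (h : ∀ s, a < s → s < b → s ≤ t ∧ ℓ (t - s) > s) :
    b - a ≤ (volume {s : ℝ | s ∈ Set.Icc 0 t ∧ ℓ (t - s) > s}).toReal := by
  have h1 : volume (Set.Ioo a b) ≤ volume {s : ℝ | s ∈ Set.Icc 0 t ∧ ℓ (t - s) > s} :=
    measure_mono (fun s hs =>
      ⟨⟨ha.trans hs.1.le, (h s hs.1 hs.2).1⟩, (h s hs.1 hs.2).2⟩)
  have h2 := ENNReal.toReal_mono (mancala_fin ℓ 0 t) h1
  simpa [hb] using h2

lemma mancala_ge (u0 : ℝ → ℝ) (hu : ∀ t ≥ (0 : ℝ), 0 ≤ u0 t)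
    (α : ℝ) (hα : 0 < α) (hp : ∀ t ∈ Set.Ico (0 : ℝ) α, α ≤ u0 t) (ℓ : ℝ → ℝ)
    (h : ∀ t ≥ (0 : ℝ),
      ℓ t = u0 t + (volume {s : ℝ | s ∈ Set.Icc 0 t ∧ ℓ (t - s) > s}).toReal) :
    ∀ t, 0 ≤ t → α ≤ ℓ t := by
  have key : ∀ n : ℕ, ∀ t, 0 ≤ t → t < (n + 1) * α → α ≤ ℓ t := by
    intro n
    induction n with
    | zero =>
      intro t h0 h1
      have h2 := hp t ⟨h0, by simpa using h1⟩
      rw [h t h0]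
      linarith [ENNReal.toReal_nonneg
        (a := volume {s : ℝ | s ∈ Set.Icc 0 t ∧ ℓ (t - s) > s})]
    | succ n ih =>
      push_cast
      obtain ⟨T, hT⟩ : ∃ T : ℝ, T = (n + 1) * α := ⟨_, rfl⟩
      rw [← hT] at ih
      have hTα : α ≤ T := by
        have : 0 ≤ (n : ℝ) * α := by positivity
        rw [hT]; linarith
      have e : ((n : ℝ) + 1 + 1) * α = T + α := by rw [hT]; ring
      rw [e]
      have step : ∀ t, T ≤ t → t < T + α → α - (t - T) ≤ ℓ t := by
        intro t h1 h2
        rw [h t (by linarith)]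
        have := mancala_lower' ℓ t (t - T) α (by linarith) (by linarith) (by
          intro s h3 h4
          refine ⟨by linarith, ?_⟩
          have := ih (t - s) (by linarith) (by linarith)
          linarith)
        linarith [hu t (by linarith)]
      intro t h0 h1
      rcases lt_or_ge t T with h2 | h2
      · exact ih t h0 h2
      rw [h t h0]
      have := mancala_lower ℓ t α hα.le (by
        intro s h3 h4
        refine ⟨by linarith, ?_⟩
        rcases lt_or_ge (t - s) T with h5 | h5
        · have := ih (t - s) (by linarith) h5
          linarith
        · have := step (t - s) h5 (by linarith)
          linarith)
      linarith [hu t h0]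
  intro t h0
  obtain ⟨n, hn⟩ := exists_nat_gt (t / α)
  refine key n t h0 ?_
  rw [div_lt_iff₀ hα] at hn
  linarith

/-- A locally-BV function `ℓ` solves the nonlocal free-boundary
equation iff `ℓ(t) = u0(t) + t` on `[0,α)` and
`ℓ(t) = u0(t) + α + |{ s ∈ [α,t] : ℓ(t−s) > s }|` on `[α,∞)`. -/
theorem mancala_freeBoundary_translated_formulation
    (u0 : ℝ → ℝ)
    (hu0_nonneg : ∀ t ≥ (0 : ℝ), 0 ≤ u0 t)
    (hu0_rc : ∀ t ≥ (0 : ℝ), ContinuousWithinAt u0 (Set.Ici t) t)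
    (hu0_bv : ∀ a > (0 : ℝ), BoundedVariationOn u0 (Set.Icc 0 a))
    (α : ℝ) (hα : 0 < α)
    (hu0_pos : ∀ t ∈ Set.Ico (0 : ℝ) α, α ≤ u0 t)
    (ℓ : ℝ → ℝ)
    (hℓ_bv : ∀ a > (0 : ℝ), BoundedVariationOn ℓ (Set.Icc 0 a)) :
    (∀ t ≥ (0 : ℝ),
      ℓ t = u0 t + (volume {s : ℝ | s ∈ Set.Icc 0 t ∧ ℓ (t - s) > s}).toReal)
    ↔
    ((∀ t ∈ Set.Ico (0 : ℝ) α, ℓ t = u0 t + t) ∧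
     (∀ t ∈ Set.Ici α,
       ℓ t = u0 t + α
         + (volume {s : ℝ | s ∈ Set.Icc α t ∧ ℓ (t - s) > s}).toReal)) := by
  constructor
  · intro h
    have hge := mancala_ge u0 hu0_nonneg α hα hu0_pos ℓ h
    refine ⟨fun t ht => ?_, fun t ht => ?_⟩
    · rw [h t ht.1, mancala_small ℓ α t ht (fun r hr _ => hge r hr)]
    · rw [h t (hα.le.trans ht), mancala_large ℓ α hα t ht hge, add_assoc]
  · rintro ⟨h1, h2⟩
    have hge : ∀ t, 0 ≤ t → α ≤ ℓ t := by
      intro t ht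
      rcases lt_or_ge t α with h3 | h3
      · rw [h1 t ⟨ht, h3⟩]
        linarith [hu0_pos t ⟨ht, h3⟩]
      · rw [h2 t h3]
        linarith [hu0_nonneg t ht, ENNReal.toReal_nonneg
          (a := volume {s : ℝ | s ∈ Set.Icc α t ∧ ℓ (t - s) > s})]
    intro t ht
    rcases lt_or_ge t α with h3 | h3
    · rw [mancala_small ℓ α t ⟨ht, h3⟩ (fun r hr _ => hge r hr), h1 t ⟨ht, h3⟩]
    · rw [mancala_large ℓ α hα t h3 hge, h2 t h3, add_assoc]
end

section
/- Let u0₁, u0₂ : [0,∞) → ℝ be nonnegative, right-continuous, of locally bounded variation, both satisfying the positivity condition for some α > 0 (u0ᵢ(t) ≥ α for all t ∈ [0,α)), and let ℓ₁, ℓ₂ be the corresponding solutions of the nonlocal free-boundary equation ℓᵢ(t) = u0ᵢ(t) + |{ s ∈ [0,t] : ℓᵢ(t−s) > s }| for all t ≥ 0. If u0₁(t) ≤ u0₂(t) for all t ≥ 0, then ℓ₁(t) ≤ ℓ₂(t) for all t ≥ 0. -/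
open MeasureTheory Set

lemma fb_toReal_mono {A B : Set ℝ} {t : ℝ} (h : A ⊆ B) (hB : B ⊆ Set.Icc 0 t) :
    (volume A).toReal ≤ (volume B).toReal := by
  apply ENNReal.toReal_mono _ (measure_mono h)
  exact ne_top_of_le_ne_top (by simp) (measure_mono hB)

lemma fb_lower_meas {l : ℝ → ℝ} {t a b : ℝ} (hab : a ≤ b)
    (h : ∀ s ∈ Set.Ico a b, s ∈ Set.Icc 0 t ∧ l (t - s) > s) :
    b - a ≤ (volume {s : ℝ | s ∈ Set.Icc 0 t ∧ l (t - s) > s}).toReal := by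
  have := fb_toReal_mono (A := Set.Ico a b)
    (B := {s : ℝ | s ∈ Set.Icc 0 t ∧ l (t - s) > s}) (t := t) (fun s hs => h s hs)
    (fun s hs => hs.1)
  rwa [Real.volume_Ico, ENNReal.toReal_ofReal (by linarith)] at this

lemma fb_lower (u l : ℝ → ℝ) (hu : ∀ t ≥ (0 : ℝ), 0 ≤ u t) (α : ℝ) (hα : 0 < α)
    (hpos : ∀ t ∈ Set.Ico (0 : ℝ) α, α ≤ u t)
    (hl : ∀ t ≥ (0 : ℝ), l t = u t + (volume {s : ℝ | s ∈ Set.Icc 0 t ∧ l (t - s) > s}).toReal)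
    (n : ℕ) : ∀ t, 0 ≤ t → t ≤ n * (α / 4) → α ≤ l t := by
  have small : ∀ t, 0 ≤ t → t < α → α ≤ l t := by
    intro t h0 h1
    rw [hl t h0]
    have := hpos t ⟨h0, h1⟩
    have := ENNReal.toReal_nonneg (a := volume {s : ℝ | s ∈ Set.Icc 0 t ∧ l (t - s) > s})
    linarith
  induction n with
  | zero =>
    intro t h0 h1
    apply small t h0
    simp at h1
    linarith
  | succ n ih =>
    push_cast
    have weak : ∀ t, 0 ≤ t → t ≤ (n + 1) * (α / 4) → α - α / 4 ≤ l t := by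
      intro t h0 h1
      rcases lt_or_ge t α with h | h
      · linarith [small t h0 h]
      have := fb_lower_meas (l := l) (t := t) (a := α / 4) (b := α) (by linarith) (by
        rintro s ⟨h2, h3⟩
        refine ⟨⟨by linarith, by linarith⟩, ?_⟩
        linarith [ih (t - s) (by linarith) (by linarith)])
      rw [hl t h0]
      linarith [hu t h0]
    intro t h0 h1
    rcases lt_or_ge t α with h | h
    · exact small t h0 h
    have := fb_lower_meas (l := l) (t := t) (a := 0) (b := α) (by linarith) (by
      rintro s ⟨h2, h3⟩
      refine ⟨⟨by linarith, by linarith⟩, ?_⟩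
      rcases lt_or_ge s (α / 4) with h4 | h4
      · linarith [weak (t - s) (by linarith) (by linarith)]
      · linarith [ih (t - s) (by linarith) (by linarith)])
    rw [hl t h0]
    linarith [hu t h0]

/-- Monotonicity (comparison principle) for the free boundary:
if `u0₁ ≤ u0₂` then the corresponding solutions satisfy `ℓ₁ ≤ ℓ₂`. -/
theorem mancala_freeBoundary_monotonicity
    (u01 u02 : ℝ → ℝ)
    (hu01_nonneg : ∀ t ≥ (0 : ℝ), 0 ≤ u01 t)
    (hu02_nonneg : ∀ t ≥ (0 : ℝ), 0 ≤ u02 t)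
    (hu01_rc : ∀ t ≥ (0 : ℝ), ContinuousWithinAt u01 (Set.Ici t) t)
    (hu02_rc : ∀ t ≥ (0 : ℝ), ContinuousWithinAt u02 (Set.Ici t) t)
    (hu01_bv : ∀ a > (0 : ℝ), BoundedVariationOn u01 (Set.Icc 0 a))
    (hu02_bv : ∀ a > (0 : ℝ), BoundedVariationOn u02 (Set.Icc 0 a))
    (α : ℝ) (hα : 0 < α)
    (hu01_pos : ∀ t ∈ Set.Ico (0 : ℝ) α, α ≤ u01 t)
    (hu02_pos : ∀ t ∈ Set.Ico (0 : ℝ) α, α ≤ u02 t)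
    (ℓ₁ ℓ₂ : ℝ → ℝ)
    (hℓ₁ : ∀ t ≥ (0 : ℝ),
      ℓ₁ t = u01 t + (volume {s : ℝ | s ∈ Set.Icc 0 t ∧ ℓ₁ (t - s) > s}).toReal)
    (hℓ₂ : ∀ t ≥ (0 : ℝ),
      ℓ₂ t = u02 t + (volume {s : ℝ | s ∈ Set.Icc 0 t ∧ ℓ₂ (t - s) > s}).toReal)
    (h_le : ∀ t ≥ (0 : ℝ), u01 t ≤ u02 t) :
    ∀ t ≥ (0 : ℝ), ℓ₁ t ≤ ℓ₂ t := by
  have cover : ∀ t : ℝ, ∃ n : ℕ, t ≤ n * (α / 4) := by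
    intro t
    obtain ⟨n, hn⟩ := exists_nat_ge (t / (α / 4))
    exact ⟨n, (div_le_iff₀ (by linarith)).1 hn⟩
  have low : ∀ t ≥ (0 : ℝ), α ≤ ℓ₂ t := by
    intro t ht
    obtain ⟨n, hn⟩ := cover t
    exact fb_lower u02 ℓ₂ hu02_nonneg α hα hu02_pos hℓ₂ n t ht hn
  have key : ∀ n : ℕ, ∀ t, 0 ≤ t → t < n * (α / 4) → ℓ₁ t ≤ ℓ₂ t := by
    intro n
    induction n with
    | zero =>
      intro t h0 h1
      simp at h1
      linarith
    | succ n ih =>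
      push_cast
      intro t h0 h1
      rw [hℓ₁ t h0, hℓ₂ t h0]
      refine add_le_add (h_le t h0) (fb_toReal_mono (t := t) ?_ (fun s hs => hs.1))
      rintro s ⟨⟨h2, h3⟩, h4⟩
      refine ⟨⟨h2, h3⟩, ?_⟩
      rcases lt_or_ge s (α / 4) with h5 | h5
      · linarith [low (t - s) (by linarith)]
      · linarith [ih (t - s) (by linarith) (by linarith)]
  intro t ht
  obtain ⟨n, hn⟩ := cover t
  refine key (n + 1) t ht ?_
  push_cast
  linarith
end

section
/- Let u0 : [0,∞) → ℝ be nonnegative, bounded, right-continuous, and of locally bounded variation (no positivity at the origin is assumed). Then there exists a function ℓ : [0,∞) → ℝ satisfying ℓ(t) = u0(t) + |{ s ∈ [0,t] : ℓ(t−s) ≥ s }| for every t ∈ [0,∞) (the nonlocal equation with non-strict inequality), and satisfying the one-sided Lipschitz condition ℓ(t+τ) − ℓ(t) ≤ u0(t+τ) − u0(t) + τ for every t > 0 and τ ≥ 0. -/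
open MeasureTheory Set

noncomputable def mancG (f : ℝ → ℝ) (t : ℝ) : ℝ :=
  (volume {r : ℝ | r ∈ Set.Icc 0 t ∧ t ≤ r + f r}).toReal

noncomputable def mancL (v : ℝ → ℝ) : ℕ → ℝ → ℝ
  | 0 => fun t => v t + max t 0
  | n + 1 => fun t => v t + mancG (mancL v n) t

lemma mancFin (f : ℝ → ℝ) (t : ℝ) :
    volume {r : ℝ | r ∈ Set.Icc 0 t ∧ t ≤ r + f r} ≠ ⊤ :=
  ne_top_of_le_ne_top (b := volume (Set.Icc 0 t)) (by simp)
    (measure_mono fun _ h => h.1)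

lemma mancG_meas {f : ℝ → ℝ} (hf : Measurable f) : Measurable (mancG f) := by
  have hs : MeasurableSet {p : ℝ × ℝ | (0 ≤ p.2 ∧ p.2 ≤ p.1) ∧ p.1 ≤ p.2 + f p.2} := by
    have h1 : MeasurableSet {p : ℝ × ℝ | 0 ≤ p.2} :=
      measurableSet_le measurable_const measurable_snd
    have h2 : MeasurableSet {p : ℝ × ℝ | p.2 ≤ p.1} :=
      measurableSet_le measurable_snd measurable_fst
    have h3 : MeasurableSet {p : ℝ × ℝ | p.1 ≤ p.2 + f p.2} :=
      measurableSet_le measurable_fst (measurable_snd.add (hf.comp measurable_snd))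
    exact (h1.inter h2).inter h3
  exact (measurable_measure_prodMk_left (ν := (volume : Measure ℝ)) hs).ennreal_toReal

lemma mancL_meas {v : ℝ → ℝ} (hv : Measurable v) (n : ℕ) : Measurable (mancL v n) := by
  induction n with
  | zero => simp only [mancL]; fun_prop
  | succ n ih => exact hv.add (mancG_meas ih)

lemma mancG_mono {f g : ℝ → ℝ} (h : ∀ t, f t ≤ g t) (t : ℝ) : mancG f t ≤ mancG g t :=
  ENNReal.toReal_mono (mancFin g t)
    (measure_mono fun r hr => ⟨hr.1, hr.2.trans (by linarith [h r])⟩)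

lemma mancG_le (f : ℝ → ℝ) (t : ℝ) : mancG f t ≤ max t 0 := by
  have : mancG f t ≤ (volume (Set.Icc 0 t)).toReal :=
    ENNReal.toReal_mono (by simp) (measure_mono fun _ h => h.1)
  simpa [ENNReal.toReal_ofReal'] using this

lemma mancL_succ_le (v : ℝ → ℝ) (n : ℕ) : ∀ t, mancL v (n + 1) t ≤ mancL v n t := by
  induction n with
  | zero => intro t; have := mancG_le (mancL v 0) t; simp only [mancL] at *; linarith
  | succ n ih =>
    intro t
    have := mancG_mono ih t
    rw [mancL.eq_def v (n + 1 + 1), mancL.eq_def v (n + 1)]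
    simpa using this

lemma mancL_anti (v : ℝ → ℝ) (t : ℝ) : Antitone fun n => mancL v n t :=
  antitone_nat_of_succ_le fun n => mancL_succ_le v n t

lemma mancL_lb (v : ℝ → ℝ) (n : ℕ) (t : ℝ) : v t ≤ mancL v n t := by
  cases n with
  | zero => simp [mancL]
  | succ n => simp [mancL, mancG]

lemma mancL_fix {v : ℝ → ℝ} (hv : Measurable v) (t : ℝ) :
    (⨅ n, mancL v n t) = v t + mancG (fun t => ⨅ n, mancL v n t) t := by
  have hb : ∀ t, BddBelow (range fun n => mancL v n t) := fun t =>
    ⟨v t, by rintro _ ⟨n, rfl⟩; exact mancL_lb v n t⟩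
  have h1 := (tendsto_atTop_ciInf (mancL_anti v t) (hb t)).comp (Filter.tendsto_add_atTop_nat 1)
  refine tendsto_nhds_unique h1 ?_
  have hset : {r : ℝ | r ∈ Set.Icc 0 t ∧ t ≤ r + ⨅ n, mancL v n r}
      = ⋂ n, {r : ℝ | r ∈ Set.Icc 0 t ∧ t ≤ r + mancL v n r} := by
    ext r
    simp only [mem_ofPred_eq, mem_iInter]
    constructor
    · intro h n
      exact ⟨h.1, h.2.trans (by linarith [ciInf_le (hb r) n])⟩
    · intro h
      refine ⟨(h 0).1, ?_⟩
      have : t - r ≤ ⨅ n, mancL v n r := le_ciInf fun n => by linarith [(h n).2]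
      linarith
  have h2 : Filter.Tendsto (fun n => mancG (mancL v n) t) Filter.atTop
      (nhds (mancG (fun t => ⨅ n, mancL v n t) t)) := by
    refine (ENNReal.tendsto_toReal (mancFin _ t)).comp ?_
    rw [hset]
    refine tendsto_measure_iInter_atTop (fun n => ?_) ?_ ⟨0, mancFin _ t⟩
    · have := mancL_meas hv n
      exact (measurableSet_Icc.inter
        (measurableSet_le measurable_const (measurable_id.add this))).nullMeasurableSet
    · intro m n hmn r hr
      exact ⟨hr.1, hr.2.trans (by linarith [mancL_anti v r hmn])⟩
  exact h2.const_add (v t)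

/-- For a nonnegative, bounded, right-continuous, locally BV datum
(no positivity at the origin assumed), there exists `ℓ` satisfying the nonlocal
equation with non-strict inequality
`ℓ(t) = u0(t) + |{ s ∈ [0,t] : ℓ(t−s) ≥ s }|` and the one-sided Lipschitz
condition. -/
theorem mancala_freeBoundary_existence_degenerate
    (u0 : ℝ → ℝ)
    (hu0_nonneg : ∀ t ≥ (0 : ℝ), 0 ≤ u0 t)
    (hu0_bdd : ∃ C : ℝ, ∀ t ≥ (0 : ℝ), u0 t ≤ C)
    (hu0_rc : ∀ t ≥ (0 : ℝ), ContinuousWithinAt u0 (Set.Ici t) t)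
    (hu0_bv : ∀ a > (0 : ℝ), BoundedVariationOn u0 (Set.Icc 0 a)) :
    ∃ ℓ : ℝ → ℝ,
      (∀ t ≥ (0 : ℝ),
        ℓ t = u0 t + (volume {s : ℝ | s ∈ Set.Icc 0 t ∧ ℓ (t - s) ≥ s}).toReal) ∧
      (∀ t > (0 : ℝ), ∀ τ ≥ (0 : ℝ),
        ℓ (t + τ) - ℓ t ≤ u0 (t + τ) - u0 t + τ) := by
  have hv : Measurable fun t => u0 (max t 0) := by
    have hl : LocallyBoundedVariationOn u0 (Ici 0) := by
      intro a b ha hb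
      refine (hu0_bv (b + 1) (by have := mem_Ici.1 hb; linarith)).mono ?_
      rintro x ⟨hx, hx'⟩
      exact ⟨hx, by linarith [hx'.2]⟩
    obtain ⟨p, q, hp, hq, rfl⟩ := hl.exists_monotoneOn_sub_monotoneOn
    have key : ∀ p : ℝ → ℝ, MonotoneOn p (Ici 0) → Measurable fun t => p (max t 0) := by
      intro p hp
      refine Monotone.measurable fun a b hab => hp ?_ ?_ (max_le_max_right _ hab) <;> simp
    exact (key p hp).sub (key q hq)
  set v : ℝ → ℝ := fun t => u0 (max t 0) with hvd
  have hvt : ∀ t ≥ (0 : ℝ), v t = u0 t := fun t ht => by simp [hvd, max_eq_left ht]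
  have hfix := mancL_fix hv
  set ℓ : ℝ → ℝ := fun t => ⨅ n, mancL v n t with hℓ
  replace hfix : ∀ t ≥ (0 : ℝ), ℓ t = u0 t + mancG ℓ t := fun t ht => by
    rw [← hvt t ht]; exact hfix t
  refine ⟨ℓ, fun t ht => ?_, fun t ht τ hτ => ?_⟩
  · rw [hfix t ht, mancG]
    congr 2
    rw [← (Measure.measurePreserving_sub_left (volume : Measure ℝ) t).measure_preimage_emb
      (MeasurableEquiv.subLeft t).measurableEmbedding]
    congr 1
    ext s
    simp only [mem_preimage, mem_ofPred_eq, mem_Icc]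
    constructor
    · rintro ⟨⟨h1, h2⟩, h3⟩
      exact ⟨⟨by linarith, by linarith⟩, by linarith⟩
    · rintro ⟨⟨h1, h2⟩, h3⟩
      exact ⟨⟨by linarith, by linarith⟩, by linarith⟩
  · rw [hfix t ht.le, hfix (t + τ) (by linarith)]
    have : mancG ℓ (t + τ) ≤ mancG ℓ t + τ := by
      have h := measure_mono (μ := (volume : Measure ℝ))
        (s := {r : ℝ | r ∈ Set.Icc 0 (t + τ) ∧ t + τ ≤ r + ℓ r})
        (t := {r : ℝ | r ∈ Set.Icc 0 t ∧ t ≤ r + ℓ r} ∪ Ioc t (t + τ)) (by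
          rintro r ⟨⟨h1, h2⟩, h3⟩
          rcases le_or_gt r t with h | h
          · exact Or.inl ⟨⟨h1, h⟩, by linarith⟩
          · exact Or.inr ⟨h, h2⟩)
      have h' := h.trans (measure_union_le _ _)
      have h'' := ENNReal.toReal_mono (ENNReal.add_ne_top.2 ⟨mancFin ℓ t, by simp⟩) h'
      rw [ENNReal.toReal_add (mancFin ℓ t) (by simp)] at h''
      simpa [mancG, ENNReal.toReal_ofReal hτ] using h''
    linarith
end

section
/- Let κ > 0, a > 0, and let γ = (−κ + √(κ² + 4κ))/2 be the positive root of γ² + κγ − κ = 0. Let u0 : [0,∞) → ℝ be nonnegative and let ℓ : [0,∞) → ℝ be nonnegative and satisfy the nonlocal free-boundary equation ℓ(t) = u0(t) + |{ s ∈ [0,t] : ℓ(t−s) > s }| for every t ∈ [0,∞). If u0(t) ≤ κ·t for all t ∈ [0,a], then ℓ(t) ≤ κ·t + γ·t for all t ∈ [0,a]. -/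
open MeasureTheory Set

/-- If `u0(t) ≤ κ t` on `[0,a]`, then any nonnegative solution of the
nonlocal free-boundary equation satisfies `ℓ(t) ≤ κ t + γ t` on `[0,a]`, where
`γ = (−κ + √(κ² + 4κ))/2` is the positive root of `γ² + κγ − κ = 0`. -/
theorem mancala_freeBoundary_upper_vanishing_datum
    (κ a : ℝ) (hκ : 0 < κ) (ha : 0 < a)
    (γ : ℝ) (hγ : γ = (-κ + Real.sqrt (κ ^ 2 + 4 * κ)) / 2)
    (u0 : ℝ → ℝ)
    (hu0_nonneg : ∀ t ≥ (0 : ℝ), 0 ≤ u0 t)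
    (ℓ : ℝ → ℝ)
    (hℓ_nonneg : ∀ t ≥ (0 : ℝ), 0 ≤ ℓ t)
    (hℓ : ∀ t ≥ (0 : ℝ),
      ℓ t = u0 t + (volume {s : ℝ | s ∈ Set.Icc 0 t ∧ ℓ (t - s) > s}).toReal)
    (h_upper : ∀ t ∈ Set.Icc (0 : ℝ) a, u0 t ≤ κ * t) :
    ∀ t ∈ Set.Icc (0 : ℝ) a, ℓ t ≤ κ * t + γ * t := by
  have hq : γ ^ 2 + κ * γ - κ = 0 := by
    have h := Real.sq_sqrt (show 0 ≤ κ ^ 2 + 4 * κ by positivity)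
    rw [hγ]; nlinarith
  have hγ0 : 0 < γ := by
    have h : κ < Real.sqrt (κ ^ 2 + 4 * κ) := Real.lt_sqrt_of_sq_lt (by linarith)
    rw [hγ]; linarith
  have hbound : ∀ m : ℝ, ∀ t ∈ Set.Icc (0 : ℝ) a, 0 ≤ m →
      (∀ s ∈ Set.Icc (0 : ℝ) t, ℓ (t - s) > s → s ≤ m) → ℓ t ≤ κ * t + m := by
    intro m t ht hm h
    rw [hℓ t ht.1]
    have h1 : volume {s : ℝ | s ∈ Set.Icc 0 t ∧ ℓ (t - s) > s} ≤ ENNReal.ofReal m := by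
      calc _ ≤ volume (Set.Icc (0 : ℝ) m) :=
            measure_mono (fun s hs => ⟨hs.1.1, h s hs.1 hs.2⟩)
        _ = _ := by rw [Real.volume_Icc, sub_zero]
    have h2 := ENNReal.toReal_le_of_le_ofReal hm h1
    have h3 := h_upper t ht
    linarith
  have hc : 0 < 1 + (κ + γ) := by linarith
  set q : ℝ := 1 / (1 + (κ + γ)) with hqd
  have hq0 : 0 ≤ q := by positivity
  have hq1 : q < 1 := by
    rw [hqd, div_lt_one hc]; linarith
  have key : ∀ n : ℕ, ∀ t ∈ Set.Icc (0 : ℝ) a, ℓ t ≤ (κ + γ + q ^ n) * t := by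
    intro n
    induction n with
    | zero =>
      intro t ht
      have := hbound t t ht ht.1 (fun s hs _ => hs.2)
      have := mul_nonneg hγ0.le ht.1
      nlinarith
    | succ n ih =>
      intro t ht
      have hD : 0 ≤ q ^ n := by positivity
      rw [pow_succ]
      generalize q ^ n = D at *
      have hcD : 0 < 1 + (κ + γ + D) := by linarith
      have hle : (κ + γ + D) / (1 + (κ + γ + D)) ≤ γ + D * q := by
        have e : γ = (κ + γ) / (1 + (κ + γ)) := by
          rw [eq_div_iff hc.ne']; nlinarith
        have e2 : (κ + γ + D) / (1 + (κ + γ + D)) - (κ + γ) / (1 + (κ + γ))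
            = D * q * (1 / (1 + (κ + γ + D))) := by
          rw [hqd]; field_simp; ring
        have e3 : 1 / (1 + (κ + γ + D)) ≤ 1 := by
          rw [div_le_one hcD]; linarith
        have := mul_le_mul_of_nonneg_left e3 (mul_nonneg hD hq0)
        linarith
      have := hbound ((κ + γ + D) / (1 + (κ + γ + D)) * t) t ht
        (mul_nonneg (by positivity) ht.1) (by
          intro s hs hls
          have := ih (t - s) ⟨by linarith [hs.2], by linarith [hs.1, ht.2]⟩
          rw [div_mul_eq_mul_div, le_div_iff₀ hcD]
          nlinarith)
      have := mul_le_mul_of_nonneg_right hle ht.1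
      nlinarith
  intro t ht
  have hl : Filter.Tendsto (fun n : ℕ => (κ + γ + q ^ n) * t) Filter.atTop
      (nhds ((κ + γ + 0) * t)) :=
    ((tendsto_pow_atTop_nhds_zero_of_lt_one hq0 hq1).const_add _).mul_const _
  have := ge_of_tendsto' hl (fun n => key n t ht)
  linarith
end

section
/- Let κ > 0, a > 0, and let γ = (−κ + √(κ² + 4κ))/2 be the positive root of γ² + κγ − κ = 0. Let u0 : [0,∞) → ℝ be nonnegative and let ℓ : [0,∞) → ℝ be nonnegative and satisfy the nonlocal free-boundary equation ℓ(t) = u0(t) + |{ s ∈ [0,t] : ℓ(t−s) > s }| for every t ∈ [0,∞). If u0(t) ≥ κ·t for all t ∈ [0,a], then ℓ(t) ≥ κ·t + γ·t for all t ∈ [0,a]. -/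
open MeasureTheory Set

/-- If `u0(t) ≥ κ t` on `[0,a]`, then any nonnegative solution of the
nonlocal free-boundary equation satisfies `ℓ(t) ≥ κ t + γ t` on `[0,a]`, where
`γ = (−κ + √(κ² + 4κ))/2` is the positive root of `γ² + κγ − κ = 0`. -/
theorem mancala_freeBoundary_lower_vanishing_datum
    (κ a : ℝ) (hκ : 0 < κ) (ha : 0 < a)
    (γ : ℝ) (hγ : γ = (-κ + Real.sqrt (κ ^ 2 + 4 * κ)) / 2)
    (u0 : ℝ → ℝ)
    (hu0_nonneg : ∀ t ≥ (0 : ℝ), 0 ≤ u0 t)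
    (ℓ : ℝ → ℝ)
    (hℓ_nonneg : ∀ t ≥ (0 : ℝ), 0 ≤ ℓ t)
    (hℓ : ∀ t ≥ (0 : ℝ),
      ℓ t = u0 t + (volume {s : ℝ | s ∈ Set.Icc 0 t ∧ ℓ (t - s) > s}).toReal)
    (h_lower : ∀ t ∈ Set.Icc (0 : ℝ) a, κ * t ≤ u0 t) :
    ∀ t ∈ Set.Icc (0 : ℝ) a, κ * t + γ * t ≤ ℓ t := by
  have step : ∀ c : ℝ, 0 ≤ c → (∀ t ∈ Set.Icc (0 : ℝ) a, c * t ≤ ℓ t) →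
      ∀ t ∈ Set.Icc (0 : ℝ) a, (κ + c / (1 + c)) * t ≤ ℓ t := by
    intro c hc h t ht
    have h1 : 0 < 1 + c := by linarith
    have ht0 := ht.1
    have hsub : Set.Ico (0 : ℝ) (c / (1 + c) * t) ⊆
        {s : ℝ | s ∈ Set.Icc 0 t ∧ ℓ (t - s) > s} := by
      intro s hs
      have hs0 := hs.1
      have hs2 : s * (1 + c) < c * t := by
        have := hs.2
        rw [div_mul_eq_mul_div, lt_div_iff₀ h1] at this
        exact this
      have hst : s ≤ t := by
        by_contra hh
        push Not at hh
        nlinarith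
      refine ⟨⟨hs0, hst⟩, ?_⟩
      have := h (t - s) ⟨by linarith, by linarith [ht.2]⟩
      have h3 : s < c * (t - s) := by nlinarith
      exact lt_of_lt_of_le h3 this
    have hfin : volume {s : ℝ | s ∈ Set.Icc 0 t ∧ ℓ (t - s) > s} ≠ ⊤ := by
      refine ne_top_of_le_ne_top ?_ (measure_mono (t := Set.Icc (0 : ℝ) t) (fun s hs => hs.1))
      simp
    have hm := ENNReal.toReal_mono hfin (measure_mono hsub)
    rw [Real.volume_Ico, sub_zero, ENNReal.toReal_ofReal (by positivity)] at hm
    have := hℓ t ht0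
    have := h_lower t ht
    nlinarith
  let S : Set ℝ := {c | 0 ≤ c ∧ ∀ t ∈ Set.Icc (0 : ℝ) a, c * t ≤ ℓ t}
  have h0 : (0 : ℝ) ∈ S := ⟨le_rfl, fun t ht => by simpa using hℓ_nonneg t ht.1⟩
  have hb : BddAbove S := by
    refine ⟨ℓ a / a, fun c hc => ?_⟩
    rw [le_div_iff₀ ha]
    exact hc.2 a ⟨ha.le, le_rfl⟩
  have hc0 : 0 ≤ sSup S := le_csSup hb h0
  have hcS : ∀ t ∈ Set.Icc (0 : ℝ) a, sSup S * t ≤ ℓ t := by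
    intro t ht
    rcases ht.1.eq_or_lt with h | h
    · rw [← h, mul_zero]; exact hℓ_nonneg 0 le_rfl
    · rw [← le_div_iff₀ h]
      refine csSup_le ⟨0, h0⟩ fun c hc => ?_
      rw [le_div_iff₀ h]
      exact hc.2 t ht
  have hF := le_csSup hb (show κ + sSup S / (1 + sSup S) ∈ S from
    ⟨by positivity, step _ hc0 hcS⟩)
  generalize sSup S = c at hF hc0 hcS
  have h1 : 0 < 1 + c := by linarith
  have hq : κ + κ * c ≤ c ^ 2 := by
    have h2 : c / (1 + c) * (1 + c) = c := div_mul_cancel₀ _ h1.ne'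
    nlinarith
  have hκc : κ ≤ c := by
    have : 0 ≤ c / (1 + c) := by positivity
    linarith
  have hle : κ + γ ≤ c := by
    have : Real.sqrt (κ ^ 2 + 4 * κ) ≤ 2 * c - κ := by
      apply Real.sqrt_le_iff.2
      constructor
      · linarith
      · nlinarith
    linarith
  intro t ht
  have := hcS t ht
  nlinarith [mul_le_mul_of_nonneg_right hle ht.1]
end

section
/- Let u0 : [0,∞) → ℝ be nonnegative, right-continuous, of locally bounded variation, satisfying u0(t) ≥ α for all t ∈ [0,α) for some α > 0, and let ℓ : [0,∞) → ℝ be the solution of the nonlocal free-boundary equation ℓ(t) = u0(t) + |{ s ∈ [0,t] : ℓ(t−s) > s }| for all t ≥ 0. Define v(τ,ξ) := u0(ξ) + |{ s ∈ [0,τ] : ℓ(s) + s > ξ }| for all 0 ≤ τ ≤ ξ. Then v(τ,τ) = ℓ(τ) for every τ ≥ 0, and v satisfies the integral equation v(τ,ξ) = u0(ξ) + |{ s ∈ [0,τ] : v(s,s) + s > ξ }| for all 0 ≤ τ ≤ ξ. -/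
open MeasureTheory Set

/-- With `v(τ,ξ) := u0(ξ) + |{ s ∈ [0,τ] : ℓ(s) + s > ξ }|`, the
diagonal trace satisfies `v(τ,τ) = ℓ(τ)` and `v` solves the integral equation
`v(τ,ξ) = u0(ξ) + |{ s ∈ [0,τ] : v(s,s) + s > ξ }|` on `0 ≤ τ ≤ ξ`. -/
theorem mancala_integralSolution_from_freeBoundary
    (u0 : ℝ → ℝ)
    (hu0_nonneg : ∀ t ≥ (0 : ℝ), 0 ≤ u0 t)
    (hu0_rc : ∀ t ≥ (0 : ℝ), ContinuousWithinAt u0 (Set.Ici t) t)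
    (hu0_bv : ∀ a > (0 : ℝ), BoundedVariationOn u0 (Set.Icc 0 a))
    (α : ℝ) (hα : 0 < α)
    (hu0_pos : ∀ t ∈ Set.Ico (0 : ℝ) α, α ≤ u0 t)
    (ℓ : ℝ → ℝ)
    (hℓ : ∀ t ≥ (0 : ℝ),
      ℓ t = u0 t + (volume {s : ℝ | s ∈ Set.Icc 0 t ∧ ℓ (t - s) > s}).toReal)
    (v : ℝ → ℝ → ℝ)
    (hv : ∀ τ ξ : ℝ, 0 ≤ τ → τ ≤ ξ →
      v τ ξ = u0 ξ + (volume {s : ℝ | s ∈ Set.Icc 0 τ ∧ ℓ s + s > ξ}).toReal) :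
    (∀ τ ≥ (0 : ℝ), v τ τ = ℓ τ) ∧
    (∀ τ ξ : ℝ, 0 ≤ τ → τ ≤ ξ →
      v τ ξ = u0 ξ + (volume {s : ℝ | s ∈ Set.Icc 0 τ ∧ v s s + s > ξ}).toReal) := by
  have key : ∀ τ ≥ (0 : ℝ), v τ τ = ℓ τ := by
    intro τ hτ
    rw [hv τ τ hτ le_rfl, hℓ τ hτ]
    have h := (Measure.measurePreserving_sub_left (volume : Measure ℝ) τ).measure_preimage_emb
      (MeasurableEquiv.subLeft τ).measurableEmbedding {s : ℝ | s ∈ Set.Icc 0 τ ∧ ℓ s + s > τ}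
    rw [← h]
    congr 3
    ext s
    simp only [Set.mem_preimage, Set.mem_ofPred_eq, Set.mem_Icc]
    constructor
    · rintro ⟨⟨h1, h2⟩, h3⟩
      exact ⟨⟨by linarith, by linarith⟩, by linarith⟩
    · rintro ⟨⟨h1, h2⟩, h3⟩
      exact ⟨⟨by linarith, by linarith⟩, by linarith⟩
  refine ⟨key, fun τ ξ hτ hξ => ?_⟩
  rw [hv τ ξ hτ hξ]
  congr 3
  ext s
  simp only [Set.mem_ofPred_eq]
  refine and_congr_right fun hs => ?_
  rw [key s hs.1]
end

section
/- Let u0 : [0,∞) → ℝ be nonnegative, right-continuous, of locally bounded variation, satisfying u0(t) ≥ α for all t ∈ [0,α) for some α > 0. Suppose w : {(τ,ξ) : 0 ≤ τ ≤ ξ} → [0,∞) is locally bounded, for every τ > 0 the right limit w(τ,τ) := lim_{ξ→τ⁺} w(τ,ξ) exists and is finite, and w(τ,ξ) = u0(ξ) + |{ s ∈ [0,τ] : w(s,s) + s > ξ }| for all 0 ≤ τ ≤ ξ. Let ℓ be the solution of the nonlocal free-boundary equation ℓ(t) = u0(t) + |{ s ∈ [0,t] : ℓ(t−s) > s }|.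 Then w(τ,ξ) = u0(ξ) + |{ s ∈ [0,τ] : ℓ(s) + s > ξ }| for all 0 ≤ τ ≤ ξ; in particular the integral solution is unique. -/
open MeasureTheory Set Filter Topology

/-- A solution of the reflected equation on the half line. -/
def MSol (u0 a : ℝ → ℝ) : Prop :=
  ∀ t ≥ (0 : ℝ), a t = u0 t + (volume {s : ℝ | s ∈ Set.Icc 0 t ∧ a s + s > t}).toReal

lemma msol_fin (a : ℝ → ℝ) (t r : ℝ) :
    volume {s : ℝ | s ∈ Set.Icc 0 t ∧ a s + s > r} ≠ ⊤ := by
  refine ne_top_of_le_ne_top ?_ (measure_mono (t := Set.Icc 0 t) (fun s hs => hs.1))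
  simp

lemma msol_mono (a : ℝ → ℝ) :
    MonotoneOn (fun t : ℝ => t - (volume {s : ℝ | s ∈ Set.Icc 0 t ∧ a s + s > t}).toReal)
      (Set.Ici 0) := by
  intro x hx y hy hxy
  have h1 : volume {s : ℝ | s ∈ Set.Icc 0 y ∧ a s + s > y} ≤
      volume {s : ℝ | s ∈ Set.Icc 0 x ∧ a s + s > x} + volume (Set.Icc x y) := by
    refine (measure_mono ?_).trans (measure_union_le _ _)
    rintro s ⟨⟨h0, h1⟩, h2⟩
    by_cases h : s ≤ x
    · exact Or.inl ⟨⟨h0, h⟩, by simp only [gt_iff_lt] at *; linarith⟩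
    · exact Or.inr ⟨by linarith, h1⟩
  have h2 := ENNReal.toReal_mono (ENNReal.add_ne_top.mpr ⟨msol_fin a x x, by simp⟩) h1
  rw [ENNReal.toReal_add (msol_fin a x x) (by simp)] at h2
  have h3 : (volume (Set.Icc x y)).toReal = y - x := by
    rw [Real.volume_Icc, ENNReal.toReal_ofReal (by linarith)]
  simp only
  linarith

lemma msol_pos (u0 : ℝ → ℝ)
    (hu0_nonneg : ∀ t ≥ (0 : ℝ), 0 ≤ u0 t)
    (hu0_bv : ∀ a > (0 : ℝ), BoundedVariationOn u0 (Set.Icc 0 a))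
    (α : ℝ) (hα : 0 < α)
    (hu0_pos : ∀ t ∈ Set.Ico (0 : ℝ) α, α ≤ u0 t)
    (a : ℝ → ℝ) (ha : MSol u0 a) (T : ℝ) (hT : 0 ≤ T) : 0 < a T := by
  have hnn : ∀ t ≥ (0 : ℝ), 0 ≤ a t := fun t ht => by
    rw [ha t ht]; exact add_nonneg (hu0_nonneg t ht) ENNReal.toReal_nonneg
  by_contra hneg
  have hz : a T = 0 := le_antisymm (not_lt.mp hneg) (hnn T hT)
  have hTpos : 0 < T := by
    rcases hT.eq_or_lt with h | h
    · exfalso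
      have h1 := hu0_pos 0 ⟨le_rfl, hα⟩
      have h2 := ha T hT
      rw [← h] at h2 hz
      have := ENNReal.toReal_nonneg (a := volume {s : ℝ | s ∈ Set.Icc 0 (0:ℝ) ∧ a s + s > 0})
      linarith
    · exact h
  have hF : volume {s : ℝ | s ∈ Set.Icc 0 T ∧ a s + s > T} = 0 := by
    have h2 := ha T hT
    have h3 := hu0_nonneg T hT
    have h4 := ENNReal.toReal_nonneg (a := volume {s : ℝ | s ∈ Set.Icc 0 T ∧ a s + s > T})
    have h5 : (volume {s : ℝ | s ∈ Set.Icc 0 T ∧ a s + s > T}).toReal = 0 := by linarith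
    exact ((ENNReal.toReal_eq_zero_iff _).mp h5).resolve_right (msol_fin a T T)
  -- clamp
  let c : ℝ → ℝ := fun s => max 0 (min s T)
  have hcm : Monotone c := fun x y h => max_le_max le_rfl (min_le_min h le_rfl)
  have hcI : ∀ s, c s ∈ Set.Icc 0 T := fun s => ⟨le_max_left _ _, max_le hT (min_le_right _ _)⟩
  have hcid : ∀ s ∈ Set.Icc 0 T, c s = s := fun s hs => by
    simp only [c]; rw [min_eq_left hs.2, max_eq_right hs.1]
  obtain ⟨p, q, hp, hq, hpq⟩ :=
    (hu0_bv T hTpos).locallyBoundedVariationOn.exists_monotoneOn_sub_monotoneOn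
  have hmc : ∀ f : ℝ → ℝ, MonotoneOn f (Set.Icc 0 T) → Measurable (fun s => f (c s)) :=
    fun f hf => Monotone.measurable (fun x y h => hf (hcI x) (hcI y) (hcm h))
  have hum : Measurable (fun s => u0 (c s)) := by
    rw [hpq]; exact (hmc p hp).sub (hmc q hq)
  have hLm : Measurable (fun s => a (c s)) := by
    have h1 := hmc _ ((msol_mono a).mono (fun x hx => hx.1 : Set.Icc 0 T ⊆ Set.Ici 0))
    have h2 : (fun s => a (c s)) = fun s => u0 (c s) + (c s - (c s -
        (volume {r : ℝ | r ∈ Set.Icc 0 (c s) ∧ a r + r > c s}).toReal)) := by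
      funext s; rw [ha (c s) (hcI s).1]; ring
    rw [h2]
    exact hum.add (hcm.measurable.sub h1)
  let R : Set (ℝ × ℝ) :=
    {z | 0 ≤ z.1 ∧ z.1 ≤ z.2 ∧ z.2 ≤ T ∧ z.2 < a (c z.1) + z.1}
  have hR : MeasurableSet R := by
    have hL2 : Measurable (fun z : ℝ × ℝ => a (c z.1) + z.1) :=
      (hLm.comp measurable_fst).add measurable_fst
    exact (measurableSet_le measurable_const measurable_fst).inter
      ((measurableSet_le measurable_fst measurable_snd).inter
      ((measurableSet_le measurable_snd measurable_const).inter
      (measurableSet_lt measurable_snd hL2)))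
  have hA : ∫⁻ t in Set.Icc 0 T, ENNReal.ofReal (a (c t)) ≤ (volume.prod volume) R := by
    rw [Measure.prod_apply hR]
    refine le_trans ?_ (setLIntegral_le_lintegral (Set.Icc 0 T) _)
    refine setLIntegral_mono_ae' measurableSet_Icc ?_
    have : ∀ᵐ s : ℝ, ¬ (s ∈ Set.Icc 0 T ∧ a s + s > T) := by
      rw [ae_iff]; simpa [and_assoc] using hF
    filter_upwards [this] with s hs hsI
    have h1 : a s + s ≤ T := by
      by_contra h; exact hs ⟨hsI, not_le.mp h⟩
    rw [hcid s hsI]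
    have h2 : Set.Ico s (a s + s) ⊆ Prod.mk s ⁻¹' R := by
      rintro t ⟨ht1, ht2⟩
      refine ⟨hsI.1, ht1, by simp only; linarith, ?_⟩
      simp only [hcid s hsI]; exact ht2
    refine le_trans ?_ (measure_mono h2)
    rw [Real.volume_Ico]; simp
  have hB : (volume.prod volume) R ≤ ∫⁻ t in Set.Icc 0 T,
      ENNReal.ofReal (a (c t) - u0 (c t)) := by
    rw [Measure.prod_apply_symm hR, ← lintegral_indicator measurableSet_Icc]
    refine lintegral_mono fun t => ?_
    by_cases ht : t ∈ Set.Icc 0 T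
    · rw [Set.indicator_of_mem ht, hcid t ht, ha t ht.1, add_sub_cancel_left,
        ENNReal.ofReal_toReal (msol_fin a t t)]
      refine measure_mono ?_
      rintro s ⟨h0, h1, h2, h3⟩
      simp only at h0 h1 h2 h3
      rw [hcid s ⟨h0, h1.trans h2⟩] at h3
      exact ⟨⟨h0, h1⟩, h3⟩
    · have : (fun x => (x, t)) ⁻¹' R = ∅ := by
        ext s; simp only [Set.mem_preimage, Set.mem_empty_iff_false, iff_false]
        rintro ⟨h0, h1, h2, h3⟩
        exact ht ⟨h0.trans h1, h2⟩
      simp [this]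
  have hC : ∫⁻ t in Set.Icc 0 T, ENNReal.ofReal (a (c t)) =
      (∫⁻ t in Set.Icc 0 T, ENNReal.ofReal (u0 (c t))) +
      ∫⁻ t in Set.Icc 0 T, ENNReal.ofReal (a (c t) - u0 (c t)) := by
    rw [← lintegral_add_left hum.ennreal_ofReal]
    refine lintegral_congr fun t => ?_
    rw [← ENNReal.ofReal_add (hu0_nonneg _ (hcI t).1)]
    · congr 1; ring
    · rw [ha _ (hcI t).1]; simp
  have hfin : (volume.prod volume) R ≠ ⊤ := by
    refine ne_top_of_le_ne_top (b := (volume.prod volume) (Set.Icc 0 T ×ˢ Set.Icc 0 T)) ?_ ?_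
    · rw [Measure.prod_prod]; simp [ENNReal.mul_eq_top]
    · refine measure_mono ?_
      rintro ⟨s, t⟩ ⟨h0, h1, h2, h3⟩
      simp only at h0 h1 h2
      exact ⟨⟨h0, h1.trans h2⟩, ⟨h0.trans h1, h2⟩⟩
  have hU : ∫⁻ t in Set.Icc 0 T, ENNReal.ofReal (u0 (c t)) = 0 := by
    have h1 := (hC ▸ hA).trans' (add_le_add_right hB _)
    by_contra h
    have h2 := ENNReal.lt_add_right hfin h
    rw [add_comm] at h2
    exact absurd h1 (not_le.mpr h2)
  have hD : ENNReal.ofReal α * volume (Set.Ico 0 (min α T)) ≤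
      ∫⁻ t in Set.Icc 0 T, ENNReal.ofReal (u0 (c t)) := by
    rw [← setLIntegral_const]
    refine (setLIntegral_mono' measurableSet_Ico ?_).trans
      (lintegral_mono_set (?_ : Set.Ico 0 (min α T) ⊆ Set.Icc 0 T))
    · intro t ht
      have h1 := lt_min_iff.mp ht.2
      rw [hcid t ⟨ht.1, h1.2.le⟩]
      exact ENNReal.ofReal_le_ofReal (hu0_pos t ⟨ht.1, h1.1⟩)
    · intro t ht
      exact ⟨ht.1, (lt_min_iff.mp ht.2).2.le⟩
  rw [hU, Real.volume_Ico] at hD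
  have h3 : 0 < ENNReal.ofReal α * ENNReal.ofReal (min α T - 0) := by
    apply ENNReal.mul_pos
    · simpa using hα
    · simpa using ⟨hα, hTpos⟩
  exact absurd hD (not_le.mpr h3)

lemma msol_pos_right (u0 : ℝ → ℝ)
    (hu0_nonneg : ∀ t ≥ (0 : ℝ), 0 ≤ u0 t)
    (hu0_rc : ∀ t ≥ (0 : ℝ), ContinuousWithinAt u0 (Set.Ici t) t)
    (a : ℝ → ℝ) (ha : MSol u0 a) (T : ℝ) (hT : 0 ≤ T) (hpos : 0 < a T) :
    ∃ δ > 0, ∀ t, T ≤ t → t < T + δ → δ ≤ a t := by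
  by_cases hu : 0 < u0 T
  · have h1 : ∀ᶠ t in 𝓝[≥] T, u0 T / 2 < u0 t :=
      (hu0_rc T hT).eventually (lt_mem_nhds (by linarith))
    obtain ⟨r, hr, h2⟩ := mem_nhdsGE_iff_exists_Ico_subset.mp h1
    refine ⟨min (u0 T / 2) (r - T), lt_min (by linarith) (sub_pos.mpr hr), fun t h3 h4 => ?_⟩
    have h5 : u0 T / 2 < u0 t := h2 ⟨h3, by linarith [min_le_right (u0 T / 2) (r - T)]⟩
    rw [ha t (hT.trans h3)]
    have := ENNReal.toReal_nonneg (a := volume {s : ℝ | s ∈ Set.Icc 0 t ∧ a s + s > t})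
    linarith [min_le_left (u0 T / 2) (r - T)]
  · have hn : ∃ n : ℕ, volume {s : ℝ | s ∈ Set.Icc 0 T ∧ a s + s > T + 1 / ((n : ℝ) + 1)} ≠ 0 := by
      by_contra! h
      have h1 := measure_iUnion_null h
      have h2 : volume {s : ℝ | s ∈ Set.Icc 0 T ∧ a s + s > T} = 0 := by
        refine measure_mono_null ?_ h1
        rintro s ⟨hs, h3⟩
        obtain ⟨n, h4⟩ := exists_nat_one_div_lt (sub_pos.mpr h3)
        exact Set.mem_iUnion.mpr ⟨n, hs, by simp only [gt_iff_lt]; linarith⟩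
      have h3 := ha T hT
      rw [h2] at h3
      simp at h3
      linarith
    obtain ⟨n, hn⟩ := hn
    have hd := ENNReal.toReal_pos hn (msol_fin a _ _)
    have hn1 : (0 : ℝ) < 1 / ((n : ℝ) + 1) := by positivity
    refine ⟨min _ _, lt_min hd hn1, fun t h3 h4 => ?_⟩
    refine (min_le_left _ _).trans ?_
    rw [ha t (hT.trans h3)]
    refine (ENNReal.toReal_mono (msol_fin a _ _) (measure_mono ?_)).trans
      (le_add_of_nonneg_left (hu0_nonneg t (hT.trans h3)))
    rintro s ⟨hs, h5⟩
    have h6 := h4.trans_le (add_le_add_right (min_le_right _ _) T)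
    exact ⟨⟨hs.1, hs.2.trans h3⟩, h6.trans h5⟩

lemma msol_unique (u0 : ℝ → ℝ)
    (hu0_nonneg : ∀ t ≥ (0 : ℝ), 0 ≤ u0 t)
    (hu0_rc : ∀ t ≥ (0 : ℝ), ContinuousWithinAt u0 (Set.Ici t) t)
    (hu0_bv : ∀ a > (0 : ℝ), BoundedVariationOn u0 (Set.Icc 0 a))
    (α : ℝ) (hα : 0 < α)
    (hu0_pos : ∀ t ∈ Set.Ico (0 : ℝ) α, α ≤ u0 t)
    (a b : ℝ → ℝ) (ha : MSol u0 a) (hb : MSol u0 b) : ∀ t ≥ 0, a t = b t := by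
  by_contra! hne
  let S : Set ℝ := {t | 0 ≤ t ∧ a t ≠ b t}
  have hS : S.Nonempty := hne
  have hbd : BddBelow S := ⟨0, fun t ht => ht.1⟩
  have hT : 0 ≤ sInf S := le_csInf hS fun t ht => ht.1
  have hlt : ∀ s, 0 ≤ s → s < sInf S → a s = b s := fun s h0 h1 => by
    by_contra h
    exact absurd (csInf_le hbd (show s ∈ S from ⟨h0, h⟩)) (not_le.mpr h1)
  obtain ⟨d, hd, hda⟩ := msol_pos_right u0 hu0_nonneg hu0_rc a ha _ hT
    (msol_pos u0 hu0_nonneg hu0_bv α hα hu0_pos a ha _ hT)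
  obtain ⟨e, he, heb⟩ := msol_pos_right u0 hu0_nonneg hu0_rc b hb _ hT
    (msol_pos u0 hu0_nonneg hu0_bv α hα hu0_pos b hb _ hT)
  obtain ⟨t, ht, h1⟩ := exists_lt_of_csInf_lt hS
    (show sInf S < sInf S + min d e by linarith [lt_min hd he])
  have h2 := csInf_le hbd ht
  have hm1 := min_le_left d e
  have hm2 := min_le_right d e
  apply ht.2
  rw [ha t ht.1, hb t ht.1]
  congr 3
  ext s
  refine and_congr_right fun hs => ?_
  by_cases h : s < sInf S
  · rw [hlt s hs.1 h]
  · rw [not_lt] at h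
    have hs2 := hs.2
    have h3 := hda s h (by linarith)
    have h4 := heb s h (by linarith)
    exact ⟨fun _ => by simp only [gt_iff_lt]; linarith, fun _ => by simp only [gt_iff_lt]; linarith⟩

/-- Uniqueness of the integral solution: any locally bounded
nonnegative `w` on the octant `{0 ≤ τ ≤ ξ}` whose right trace on the diagonal
exists (equals `w(τ,τ)`) and which satisfies the integral equation must coincide
with the solution reconstructed from the free boundary `ℓ`. -/
theorem mancala_integralSolution_uniqueness
    (u0 : ℝ → ℝ)
    (hu0_nonneg : ∀ t ≥ (0 : ℝ), 0 ≤ u0 t)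
    (hu0_rc : ∀ t ≥ (0 : ℝ), ContinuousWithinAt u0 (Set.Ici t) t)
    (hu0_bv : ∀ a > (0 : ℝ), BoundedVariationOn u0 (Set.Icc 0 a))
    (α : ℝ) (hα : 0 < α)
    (hu0_pos : ∀ t ∈ Set.Ico (0 : ℝ) α, α ≤ u0 t)
    (w : ℝ → ℝ → ℝ)
    (hw_nonneg : ∀ τ ξ : ℝ, 0 ≤ τ → τ ≤ ξ → 0 ≤ w τ ξ)
    (hw_locbdd : ∀ R > (0 : ℝ), ∃ C : ℝ, ∀ τ ξ : ℝ,
      0 ≤ τ → τ ≤ ξ → ξ ≤ R → |w τ ξ| ≤ C)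
    (hw_trace : ∀ τ > (0 : ℝ),
      Tendsto (fun ξ => w τ ξ) (𝓝[>] τ) (𝓝 (w τ τ)))
    (hw_eq : ∀ τ ξ : ℝ, 0 ≤ τ → τ ≤ ξ →
      w τ ξ = u0 ξ + (volume {s : ℝ | s ∈ Set.Icc 0 τ ∧ w s s + s > ξ}).toReal)
    (ℓ : ℝ → ℝ)
    (hℓ : ∀ t ≥ (0 : ℝ),
      ℓ t = u0 t + (volume {s : ℝ | s ∈ Set.Icc 0 t ∧ ℓ (t - s) > s}).toReal) :
    ∀ τ ξ : ℝ, 0 ≤ τ → τ ≤ ξ →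
      w τ ξ = u0 ξ + (volume {s : ℝ | s ∈ Set.Icc 0 τ ∧ ℓ s + s > ξ}).toReal := by
  have hm : MSol u0 (fun t => w t t) := fun t ht => hw_eq t t ht le_rfl
  have hl : MSol u0 ℓ := by
    intro t ht
    rw [hℓ t ht]
    congr 2
    rw [← (Measure.measurePreserving_sub_left (volume : Measure ℝ) t).measure_preimage_equiv
      (f := MeasurableEquiv.subLeft t)]
    congr 1
    ext s
    have hs : (MeasurableEquiv.subLeft t) s = t - s := rfl
    change ((MeasurableEquiv.subLeft t) s ∈ Set.Icc 0 t ∧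
      ℓ (t - (MeasurableEquiv.subLeft t) s) > (MeasurableEquiv.subLeft t) s) ↔
      (s ∈ Set.Icc 0 t ∧ ℓ s + s > t)
    rw [hs, sub_sub_cancel]
    constructor
    · rintro ⟨⟨h0, h1⟩, h2⟩
      exact ⟨⟨by linarith, by linarith⟩, by linarith⟩
    · rintro ⟨⟨h0, h1⟩, h2⟩
      exact ⟨⟨by linarith, by linarith⟩, by linarith⟩
  have he := msol_unique u0 hu0_nonneg hu0_rc hu0_bv α hα hu0_pos _ _ hm hl
  intro τ ξ hτ hξ
  rw [hw_eq τ ξ hτ hξ]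
  congr 3
  ext s
  refine and_congr_right fun hs => ?_
  have h := he s hs.1
  rw [h]
end

section
/- Let u0 : [0,∞) → ℝ be nonnegative, bounded, right-continuous, of locally bounded variation, integrable on (0,∞), and satisfying u0(t) ≥ α for all t ∈ [0,α) for some α > 0. Let ℓ be the solution of the nonlocal free-boundary equation ℓ(t) = u0(t) + |{ s ∈ [0,t] : ℓ(t−s) > s }|, and define v(τ,ξ) := u0(ξ) + |{ s ∈ [0,τ] : ℓ(s) + s > ξ }| for 0 ≤ τ ≤ ξ. Then for every τ ≥ 0 the function ξ ↦ v(τ,ξ) is integrable on (τ,∞) and ∫_τ^∞ v(τ,ξ) dξ = ∫_0^∞ u0(ξ) dξ (conservation of mass). -/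
open MeasureTheory Set

lemma mancala_reflect (ℓ : ℝ → ℝ) (t : ℝ) :
    volume {s : ℝ | s ∈ Set.Icc 0 t ∧ ℓ (t - s) > s} =
      volume {r : ℝ | r ∈ Set.Icc 0 t ∧ ℓ r + r > t} := by
  have h := (Measure.measurePreserving_sub_left (volume : Measure ℝ) t).measure_preimage_emb
    (MeasurableEquiv.subLeft t).measurableEmbedding {r : ℝ | r ∈ Set.Icc 0 t ∧ ℓ r + r > t}
  rw [← h]
  congr 1
  ext s
  simp only [mem_setOf_eq, mem_preimage, mem_Icc]
  constructor
  · rintro ⟨⟨h1, h2⟩, h3⟩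
    exact ⟨⟨by linarith, by linarith⟩, by linarith⟩
  · rintro ⟨⟨h1, h2⟩, h3⟩
    exact ⟨⟨by linarith, by linarith⟩, by linarith⟩

lemma mancala_w_le (ℓ : ℝ → ℝ) (t : ℝ) :
    volume {r : ℝ | r ∈ Set.Icc 0 t ∧ ℓ r + r > t} ≤ ENNReal.ofReal t := by
  calc _ ≤ volume (Set.Icc 0 t) := measure_mono (fun r hr => hr.1)
    _ = _ := by simp

lemma mancala_w_ge (ℓ : ℝ → ℝ) (t a b : ℝ) 
    (h : ∀ r ∈ Set.Ioo a b, r ∈ Set.Icc 0 t ∧ ℓ r + r > t) :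
    b - a ≤ (volume {r : ℝ | r ∈ Set.Icc 0 t ∧ ℓ r + r > t}).toReal := by
  have h1 : volume (Set.Ioo a b) ≤ volume {r : ℝ | r ∈ Set.Icc 0 t ∧ ℓ r + r > t} :=
    measure_mono h
  rw [Real.volume_Ioo] at h1
  have h2 := ENNReal.toReal_mono ((mancala_w_le ℓ t).trans_lt ENNReal.ofReal_lt_top).ne h1
  rw [ENNReal.toReal_ofReal'] at h2
  exact (le_max_left _ _).trans h2

lemma mancala_lower_s15 (u0 ℓ : ℝ → ℝ) (hu0_nonneg : ∀ t ≥ (0 : ℝ), 0 ≤ u0 t)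
    (α : ℝ) (hα : 0 < α) (hu0_pos : ∀ t ∈ Set.Ico (0 : ℝ) α, α ≤ u0 t)
    (hℓ : ∀ t ≥ (0 : ℝ),
      ℓ t = u0 t + (volume {r : ℝ | r ∈ Set.Icc 0 t ∧ ℓ r + r > t}).toReal) :
    ∀ t ≥ (0 : ℝ), α ≤ ℓ t := by
  have key : ∀ n : ℕ, ∀ t ≥ (0 : ℝ), t < α + n * (α / 2) → α ≤ ℓ t := by
    intro n
    induction n with
    | zero =>
      intro t ht h
      rw [hℓ t ht]
      have := hu0_pos t ⟨ht, by simpa using h⟩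
      have := ENNReal.toReal_nonneg (a := volume {r : ℝ | r ∈ Set.Icc 0 t ∧ ℓ r + r > t})
      linarith
    | succ n ih =>
      have hn : (0 : ℝ) ≤ n * (α / 2) := by positivity
      push_cast
      set T := α + n * (α / 2) with hT
      have rough : ∀ r ≥ T, r < T + α / 2 → α / 2 < ℓ r := by
        intro r h1 h2
        have h0 : 0 ≤ r := by linarith
        have := mancala_w_ge ℓ r (r - α) T (by
          rintro x ⟨hx1, hx2⟩
          have := ih x (by linarith) hx2
          exact ⟨⟨by linarith, by linarith⟩, by linarith⟩)
        rw [hℓ r h0]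
        have := hu0_nonneg r h0
        linarith
      intro t ht h
      by_cases htT : t < T
      · exact ih t ht htT
      push Not at htT
      have h2 : t < T + α / 2 := by rw [hT]; linarith
      have := mancala_w_ge ℓ t (t - α) t (by
          rintro x ⟨hx1, hx2⟩
          refine ⟨⟨by linarith, by linarith⟩, ?_⟩
          by_cases hx : x < T
          · have := ih x (by linarith) hx
            linarith
          · push Not at hx
            have := rough x hx (by linarith)
            linarith)
      rw [hℓ t ht]
      have := hu0_nonneg t ht
      linarith
  intro t ht
  obtain ⟨n, hn⟩ := exists_nat_gt (t / (α / 2))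
  rw [div_lt_iff₀ (by positivity)] at hn
  exact key n t ht (by linarith)

lemma mancala_w_meas (ℓ : ℝ → ℝ) (α : ℝ) (hα : 0 < α) (hlow : ∀ t ≥ (0 : ℝ), α ≤ ℓ t) :
    AEMeasurable (fun t : ℝ => volume {r : ℝ | r ∈ Set.Icc 0 t ∧ ℓ r + r > t})
      (volume.restrict (Set.Ioi 0)) := by
  have hsub : Set.Ioi (0 : ℝ) ⊆ ⋃ n : ℕ, Set.Ico (n * α) (n * α + α) := by
    intro t ht
    have ht : 0 < t := ht
    refine mem_iUnion.2 ⟨⌊t / α⌋₊, ?_, ?_⟩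
    · have := Nat.floor_le (a := t / α) (by positivity)
      rwa [le_div_iff₀ hα] at this
    · have := Nat.lt_floor_add_one (t / α)
      rw [div_lt_iff₀ hα] at this
      linarith
  refine AEMeasurable.mono_set hsub ?_
  rw [aemeasurable_iUnion_iff]
  intro n
  set T : ℝ := n * α with hT
  have hT0 : 0 ≤ T := by positivity
  have hanti : Antitone (fun t : ℝ => volume {r : ℝ | r ∈ Set.Ico 0 T ∧ ℓ r + r > t}) := by
    intro a b hab
    exact measure_mono (fun r hr => ⟨hr.1, lt_of_le_of_lt hab hr.2⟩)
  have hm : Measurable (fun t : ℝ => volume {r : ℝ | r ∈ Set.Ico 0 T ∧ ℓ r + r > t}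
      + ENNReal.ofReal (t - T)) := hanti.measurable.add (by fun_prop)
  refine hm.aemeasurable.congr ?_
  filter_upwards [ae_restrict_mem measurableSet_Ico] with t ht
  have : {r : ℝ | r ∈ Set.Icc 0 t ∧ ℓ r + r > t} =
      {r : ℝ | r ∈ Set.Ico 0 T ∧ ℓ r + r > t} ∪ Set.Icc T t := by
    ext r
    simp only [mem_setOf_eq, mem_union, mem_Icc, mem_Ico]
    constructor
    · rintro ⟨⟨h1, h2⟩, h3⟩
      by_cases h : r < T
      · exact Or.inl ⟨⟨h1, h⟩, h3⟩
      · exact Or.inr ⟨not_lt.1 h, h2⟩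
    · rintro (⟨⟨h1, h2⟩, h3⟩ | ⟨h1, h2⟩)
      · exact ⟨⟨h1, by linarith [ht.1]⟩, h3⟩
      · have := hlow r (by linarith)
        exact ⟨⟨by linarith, h2⟩, by linarith [ht.2]⟩
  rw [this, measure_union _ measurableSet_Icc, Real.volume_Icc]
  rw [Set.disjoint_left]
  intro r hr hr'
  exact absurd hr.1.2 (not_lt.2 hr'.1)

lemma mancala_slice (ℓ g : ℝ → ℝ) (h : ∀ᵐ s ∂(volume.restrict (Set.Ioi (0:ℝ))), ℓ s = g s)
    (c τ y : ℝ) (hcy : ∀ s, 0 < s → s ≤ τ → (s ≤ y ↔ s ≤ c)) (hc : c ≤ τ) :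
    (volume.restrict (Set.Ioc 0 τ)) {s : ℝ | s ≤ y ∧ y < g s + s} =
      volume {s : ℝ | s ∈ Set.Icc 0 c ∧ ℓ s + s > y} := by
  rw [Measure.restrict_apply' measurableSet_Ioc]
  apply measure_congr
  rw [ae_restrict_iff' measurableSet_Ioi] at h
  have h0 : ∀ᵐ s : ℝ, s ≠ 0 := by simp [ae_iff]
  filter_upwards [h, h0] with s hs hs0
  apply propext
  show ((s ≤ y ∧ y < g s + s) ∧ (0 < s ∧ s ≤ τ)) ↔ ((0 ≤ s ∧ s ≤ c) ∧ ℓ s + s > y)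
  constructor
  · rintro ⟨⟨h1, h2⟩, h3, h4⟩
    rw [hs h3]
    exact ⟨⟨h3.le, (hcy s h3 h4).1 h1⟩, h2⟩
  · rintro ⟨⟨h1, h2⟩, h3⟩
    have h4 : 0 < s := lt_of_le_of_ne h1 hs0.symm
    rw [hs h4] at h3
    exact ⟨⟨(hcy s h4 (h2.trans hc)).2 h2, h3⟩, h4, h2.trans hc⟩

lemma mancala_fubini (ℓ : ℝ → ℝ) (hℓm : AEMeasurable ℓ (volume.restrict (Set.Ioi 0)))
    (τ : ℝ) (hτ : 0 ≤ τ) :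
    ∫⁻ s in Set.Ioc 0 τ, ENNReal.ofReal (ℓ s) =
      (∫⁻ y in Set.Ioc 0 τ, volume {r : ℝ | r ∈ Set.Icc 0 y ∧ ℓ r + r > y}) +
      ∫⁻ y in Set.Ioi τ, volume {r : ℝ | r ∈ Set.Icc 0 τ ∧ ℓ r + r > y} := by
  obtain ⟨g, hg, hlg⟩ := hℓm
  set A : Set (ℝ × ℝ) := {p | p.1 ≤ p.2 ∧ p.2 < g p.1 + p.1} with hA
  have hAm : MeasurableSet A :=
    (measurableSet_le measurable_fst measurable_snd).inter
      (measurableSet_lt measurable_snd ((hg.comp measurable_fst).add measurable_fst))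
  have e1 := Measure.prod_apply (μ := volume.restrict (Set.Ioc 0 τ))
    (ν := volume.restrict (Set.Ioi (0:ℝ))) hAm
  have e2 := Measure.prod_apply_symm (μ := volume.restrict (Set.Ioc 0 τ))
    (ν := volume.restrict (Set.Ioi (0:ℝ))) hAm
  rw [e1, ← Set.Ioc_union_Ioi_eq_Ioi hτ,
    lintegral_union measurableSet_Ioi (by
      rw [Set.disjoint_left]; intro x hx hx'; exact absurd hx.2 (not_le.2 hx'))] at e2
  rw [Set.Ioc_union_Ioi_eq_Ioi hτ] at e2
  have l1 : ∫⁻ x in Set.Ioc 0 τ, (volume.restrict (Set.Ioi (0:ℝ))) (Prod.mk x ⁻¹' A)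
      = ∫⁻ s in Set.Ioc 0 τ, ENNReal.ofReal (ℓ s) := by
    apply lintegral_congr_ae
    filter_upwards [ae_restrict_mem measurableSet_Ioc,
      ae_restrict_of_ae_restrict_of_subset Set.Ioc_subset_Ioi_self hlg] with x hx hx2
    have : Prod.mk x ⁻¹' A = Set.Ico x (g x + x) := rfl
    rw [this, Measure.restrict_apply' measurableSet_Ioi, inter_eq_left.2, Real.volume_Ico, hx2]
    · congr 1; ring
    · intro z hz
      exact lt_of_lt_of_le hx.1 hz.1
  rw [← l1, e2]
  congr 1
  · apply setLIntegral_congr_fun measurableSet_Ioc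
    intro y hy
    exact mancala_slice ℓ g hlg y τ y (fun s _ _ => Iff.rfl) hy.2
  · apply setLIntegral_congr_fun measurableSet_Ioi
    intro y hy
    exact mancala_slice ℓ g hlg τ τ y (fun s _ h => ⟨fun _ => h, fun _ => h.trans (le_of_lt hy)⟩)
      le_rfl

/-- Conservation of mass: for every `τ ≥ 0`, `v(τ,·)` is integrable
on `(τ,∞)` and `∫_τ^∞ v(τ,ξ) dξ = ∫_0^∞ u0(ξ) dξ`. -/
theorem mancala_conservation_of_mass
    (u0 : ℝ → ℝ)
    (hu0_nonneg : ∀ t ≥ (0 : ℝ), 0 ≤ u0 t)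
    (hu0_bdd : ∃ C : ℝ, ∀ t ≥ (0 : ℝ), u0 t ≤ C)
    (hu0_rc : ∀ t ≥ (0 : ℝ), ContinuousWithinAt u0 (Set.Ici t) t)
    (hu0_bv : ∀ a > (0 : ℝ), BoundedVariationOn u0 (Set.Icc 0 a))
    (hu0_int : IntegrableOn u0 (Set.Ioi 0))
    (α : ℝ) (hα : 0 < α)
    (hu0_pos : ∀ t ∈ Set.Ico (0 : ℝ) α, α ≤ u0 t)
    (ℓ : ℝ → ℝ)
    (hℓ : ∀ t ≥ (0 : ℝ),
      ℓ t = u0 t + (volume {s : ℝ | s ∈ Set.Icc 0 t ∧ ℓ (t - s) > s}).toReal)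
    (v : ℝ → ℝ → ℝ)
    (hv : ∀ τ ξ : ℝ, 0 ≤ τ → τ ≤ ξ →
      v τ ξ = u0 ξ + (volume {s : ℝ | s ∈ Set.Icc 0 τ ∧ ℓ s + s > ξ}).toReal) :
    ∀ τ ≥ (0 : ℝ),
      IntegrableOn (fun ξ => v τ ξ) (Set.Ioi τ) ∧
      ∫ ξ in Set.Ioi τ, v τ ξ = ∫ ξ in Set.Ioi (0 : ℝ), u0 ξ := by
  have hℓ' : ∀ t ≥ (0 : ℝ),
      ℓ t = u0 t + (volume {r : ℝ | r ∈ Set.Icc 0 t ∧ ℓ r + r > t}).toReal := by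
    intro t ht
    rw [← mancala_reflect]
    exact hℓ t ht
  have hlow := mancala_lower_s15 u0 ℓ hu0_nonneg α hα hu0_pos hℓ'
  have hwm := mancala_w_meas ℓ α hα hlow
  have hum : AEMeasurable u0 (volume.restrict (Set.Ioi 0)) := hu0_int.aemeasurable
  have hℓm : AEMeasurable ℓ (volume.restrict (Set.Ioi 0)) := by
    refine (hum.add hwm.ennreal_toReal).congr ?_
    filter_upwards [ae_restrict_mem measurableSet_Ioi] with t ht
    exact (hℓ' t (le_of_lt ht)).symm
  intro τ hτ
  have hfub := mancala_fubini ℓ hℓm τ hτ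
  have hfin : ∀ t, volume {r : ℝ | r ∈ Set.Icc 0 t ∧ ℓ r + r > t} ≠ ⊤ := fun t =>
    ((mancala_w_le ℓ t).trans_lt ENNReal.ofReal_lt_top).ne
  have hfin2 : ∀ y, volume {r : ℝ | r ∈ Set.Icc 0 τ ∧ ℓ r + r > y} ≠ ⊤ := fun y =>
    ((measure_mono (fun r hr => hr.1 : {r : ℝ | r ∈ Set.Icc 0 τ ∧ ℓ r + r > y} ⊆ Set.Icc 0 τ)).trans_lt
      (by simp)).ne
  have hum1 : AEMeasurable u0 (volume.restrict (Set.Ioc 0 τ)) := hum.mono_set Set.Ioc_subset_Ioi_self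
  have hum2 : AEMeasurable u0 (volume.restrict (Set.Ioi τ)) := hum.mono_set (Set.Ioi_subset_Ioi hτ)
  have hsum : ∫⁻ s in Set.Ioc 0 τ, ENNReal.ofReal (ℓ s) =
      (∫⁻ y in Set.Ioc 0 τ, volume {r : ℝ | r ∈ Set.Icc 0 y ∧ ℓ r + r > y}) +
      ∫⁻ y in Set.Ioc 0 τ, ENNReal.ofReal (u0 y) := by
    rw [← lintegral_add_right' _ hum1.ennreal_ofReal]
    apply setLIntegral_congr_fun measurableSet_Ioc
    intro y hy
    have hy0 : 0 ≤ y := hy.1.le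
    simp only
    rw [hℓ' y hy0, ENNReal.ofReal_add (hu0_nonneg y hy0) ENNReal.toReal_nonneg,
      ENNReal.ofReal_toReal (hfin y), add_comm]
  have hwfin : (∫⁻ y in Set.Ioc 0 τ, volume {r : ℝ | r ∈ Set.Icc 0 y ∧ ℓ r + r > y}) ≠ ⊤ := by
    refine ne_of_lt (lt_of_le_of_lt (b := ∫⁻ y in Set.Ioc 0 τ, ENNReal.ofReal τ) ?_ ?_)
    · apply setLIntegral_mono' measurableSet_Ioc
      intro y hy
      exact (mancala_w_le ℓ y).trans (ENNReal.ofReal_le_ofReal hy.2)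
    · rw [setLIntegral_const]
      exact ENNReal.mul_lt_top ENNReal.ofReal_lt_top (by simp)
  have hW : ∫⁻ y in Set.Ioi τ, volume {r : ℝ | r ∈ Set.Icc 0 τ ∧ ℓ r + r > y} =
      ∫⁻ y in Set.Ioc 0 τ, ENNReal.ofReal (u0 y) :=
    (ENNReal.add_right_inj hwfin).1 (hfub.symm.trans hsum)
  have hanti : Antitone (fun y : ℝ => volume {r : ℝ | r ∈ Set.Icc 0 τ ∧ ℓ r + r > y}) := by
    intro a b hab
    exact measure_mono (fun r hr => ⟨hr.1, lt_of_le_of_lt hab hr.2⟩)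
  have hvm : AEMeasurable (fun ξ => v τ ξ) (volume.restrict (Set.Ioi τ)) := by
    refine (hum2.add hanti.measurable.ennreal_toReal.aemeasurable).congr ?_
    filter_upwards [ae_restrict_mem measurableSet_Ioi] with t ht
    exact (hv τ t hτ (le_of_lt ht)).symm
  have hvnn : ∀ᵐ ξ ∂(volume.restrict (Set.Ioi τ)), 0 ≤ v τ ξ := by
    filter_upwards [ae_restrict_mem measurableSet_Ioi] with t ht
    rw [hv τ t hτ (le_of_lt ht)]
    exact add_nonneg (hu0_nonneg t (hτ.trans (le_of_lt ht))) ENNReal.toReal_nonneg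
  have hunn : ∀ᵐ ξ ∂(volume.restrict (Set.Ioi (0:ℝ))), 0 ≤ u0 ξ := by
    filter_upwards [ae_restrict_mem measurableSet_Ioi] with t ht
    exact hu0_nonneg t (le_of_lt ht)
  have hvl : ∫⁻ ξ in Set.Ioi τ, ENNReal.ofReal (v τ ξ) =
      ∫⁻ ξ in Set.Ioi 0, ENNReal.ofReal (u0 ξ) := by
    rw [← Set.Ioc_union_Ioi_eq_Ioi hτ,
      lintegral_union measurableSet_Ioi (by
        rw [Set.disjoint_left]; intro x hx hx'; exact absurd hx.2 (not_le.2 hx')),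
      ← hW, ← lintegral_add_left hanti.measurable]
    apply setLIntegral_congr_fun measurableSet_Ioi
    intro y hy
    have hy : τ < y := hy
    simp only
    rw [hv τ y hτ hy.le, ENNReal.ofReal_add (hu0_nonneg y (hτ.trans hy.le)) ENNReal.toReal_nonneg,
      ENNReal.ofReal_toReal (hfin2 y), add_comm]
  constructor
  · refine ⟨hvm.aestronglyMeasurable, ?_⟩
    rw [hasFiniteIntegral_iff_ofReal hvnn, hvl, ← hasFiniteIntegral_iff_ofReal hunn]
    exact hu0_int.2
  · rw [integral_eq_lintegral_of_nonneg_ae hvnn hvm.aestronglyMeasurable,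
      integral_eq_lintegral_of_nonneg_ae hunn hu0_int.1, hvl]
end

section
/- Define real sequences (T_n), (M_n), (t_n), (m_n) for n ≥ 1 by: T_1 = 1, M_1 = 2, t_1 = 1, m_1 = 1, and for n ≥ 1, with α_n := 1/(n+1), set T_{n+1} := min(T_n + M_n, t_n + m_n), t_{n+1} := max(T_n + M_n, t_n + m_n), M_{n+1} := α_n·(1 + T_{n+1}), m_{n+1} := α_{n+1}·(1 + t_{n+1}). Then for all n ≥ 1: (a) m_n · M_n = 2; (b) 1 ≤ m_n ≤ m_{n+1} and M_{n+1} ≤ M_n ≤ 2; (c) m_n < M_n; (d) T_n ≤ t_n; (e) t_n < T_{n+1}. -/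
open Filter

/-- Properties of the Riemann-problem sequences:
with `T₁ = t₁ = 1`, `M₁ = 2`, `m₁ = 1`, `α_n = 1/(n+1)`,
`T_{n+1} = min(T_n + M_n, t_n + m_n)`, `t_{n+1} = max(T_n + M_n, t_n + m_n)`,
`M_{n+1} = α_n (1 + T_{n+1})`, `m_{n+1} = α_{n+1} (1 + t_{n+1})`,
one has, for all `n ≥ 1`:
(a) `m_n M_n = 2`, (b) `1 ≤ m_n ≤ m_{n+1}` and `M_{n+1} ≤ M_n ≤ 2`,
(c) `m_n < M_n`, (d) `T_n ≤ t_n`, (e) `t_n < T_{n+1}`. -/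
theorem mancala_riemann_sequences_properties
    (T M t m : ℕ → ℝ)
    (hT1 : T 1 = 1) (hM1 : M 1 = 2) (ht1 : t 1 = 1) (hm1 : m 1 = 1)
    (hT : ∀ n ≥ 1, T (n + 1) = min (T n + M n) (t n + m n))
    (ht : ∀ n ≥ 1, t (n + 1) = max (T n + M n) (t n + m n))
    (hM : ∀ n ≥ 1, M (n + 1) = (1 / ((n : ℝ) + 1)) * (1 + T (n + 1)))
    (hm : ∀ n ≥ 1, m (n + 1) = (1 / ((n : ℝ) + 2)) * (1 + t (n + 1))) :
    ∀ n ≥ 1,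
      m n * M n = 2 ∧
      1 ≤ m n ∧ m n ≤ m (n + 1) ∧
      M (n + 1) ≤ M n ∧ M n ≤ 2 ∧
      m n < M n ∧
      T n ≤ t n ∧
      t n < T (n + 1) := by
  have step : ∀ n : ℕ, n ≥ 1 → ((n : ℝ) * M n = 1 + T n ∧ ((n : ℝ) + 1) * m n = 1 + t n ∧
      m n * M n = 2 ∧ 1 ≤ m n ∧ M n ≤ 2 ∧ m n < M n ∧ T n ≤ t n) →
      ((((n : ℝ) + 1) * M (n + 1) = 1 + T (n + 1) ∧
        ((n : ℝ) + 2) * m (n + 1) = 1 + t (n + 1) ∧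
        m (n + 1) * M (n + 1) = 2 ∧ m n ≤ m (n + 1) ∧ M (n + 1) ≤ M n ∧
        m (n + 1) < M (n + 1) ∧ T (n + 1) ≤ t (n + 1)) ∧ t n < T (n + 1)) := by
    rintro n hn ⟨h1, h2, h3, h4, h5, h6, h7⟩
    have hx : (1 : ℝ) ≤ n := by exact_mod_cast hn
    have eM := hM n hn
    have em := hm n hn
    have eT := hT n hn
    have et := ht n hn
    have p1 : (0 : ℝ) < (n : ℝ) + 1 := by linarith
    have p2 : (0 : ℝ) < (n : ℝ) + 2 := by linarith
    have kM : ((n : ℝ) + 1) * M (n + 1) = 1 + T (n + 1) := by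
      rw [eM]; field_simp
    have km : ((n : ℝ) + 2) * m (n + 1) = 1 + t (n + 1) := by
      rw [em]; field_simp
    clear eM em
    generalize (n : ℝ) = x at *
    generalize M (n + 1) = M' at *
    generalize m (n + 1) = m' at *
    generalize T (n + 1) = T' at *
    generalize t (n + 1) = t' at *
    generalize M n = a at *
    generalize m n = b at *
    rcases le_or_gt (T n + a) (t n + b) with h | h
    · rw [min_eq_left h] at eT
      rw [max_eq_right h] at et
      have e1 : M' = a := mul_left_cancel₀ p1.ne' (by linarith)
      have e2 : m' = b := mul_left_cancel₀ p2.ne' (by linarith)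
      subst e1 e2
      refine ⟨⟨kM, km, h3, le_rfl, le_rfl, h6, by linarith⟩, ?_⟩
      nlinarith
    · rw [min_eq_right h.le] at eT
      rw [max_eq_left h.le] at et
      have k1 : (x + 1) * M' = (x + 2) * b := by linarith
      have k2 : (x + 2) * m' = (x + 1) * a := by linarith
      have hc : (x + 2) * b < (x + 1) * a := by linarith
      have hd : x * a ≤ (x + 1) * b := by linarith
      refine ⟨⟨kM, km, ?_, ?_, ?_, ?_, by linarith⟩, by linarith⟩
      · have : ((x + 1) * (x + 2)) * (m' * M') = ((x + 1) * (x + 2)) * (b * a) := by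
          calc _ = ((x + 1) * M') * ((x + 2) * m') := by ring
            _ = _ := by rw [k1, k2]; ring
        rw [← h3]
        exact mul_left_cancel₀ (by positivity) this
      · exact le_of_mul_le_mul_left (by linarith) p2
      · exact le_of_mul_le_mul_left (by linarith) p1
      · have q : 0 < x * ((x + 1) * (x + 2)) := by positivity
        refine lt_of_mul_lt_mul_left ?_ q.le
        have f1 : x * ((x + 1) * (x + 2)) * m' = (x + 1) ^ 2 * (x * a) := by
          calc _ = x * (x + 1) * ((x + 2) * m') := by ring
            _ = _ := by rw [k2]; ring
        have f2 : x * ((x + 1) * (x + 2)) * M' = x * (x + 2) ^ 2 * b := by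
          calc _ = x * (x + 2) * ((x + 1) * M') := by ring
            _ = _ := by rw [k1]; ring
        rw [f1, f2]
        have f3 : (x + 1) ^ 2 * (x * a) ≤ (x + 1) ^ 2 * ((x + 1) * b) :=
          mul_le_mul_of_nonneg_left hd (by positivity)
        have f4 : 0 < (x ^ 2 + x - 1) * b := mul_pos (by nlinarith) (by linarith)
        linarith [show x * (x + 2) ^ 2 * b - (x + 1) ^ 2 * ((x + 1) * b)
          = (x ^ 2 + x - 1) * b by ring]
  have inv : ∀ n : ℕ, n ≥ 1 → ((n : ℝ) * M n = 1 + T n ∧ ((n : ℝ) + 1) * m n = 1 + t n ∧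
      m n * M n = 2 ∧ 1 ≤ m n ∧ M n ≤ 2 ∧ m n < M n ∧ T n ≤ t n) := by
    intro n hn
    induction n, hn using Nat.le_induction with
    | base => rw [hT1, hM1, ht1, hm1]; norm_num
    | succ n hn ih =>
      obtain ⟨⟨a1, a2, a3, a4, a5, a6, a7⟩, -⟩ := step n hn ih
      obtain ⟨-, -, -, b4, b5, -, -⟩ := ih
      push_cast
      exact ⟨a1, by linarith, a3, by linarith, by linarith, a6, a7⟩
  intro n hn
  have ih := inv n hn
  obtain ⟨⟨-, -, -, a4, a5, -, -⟩, a8⟩ := step n hn ih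
  obtain ⟨-, -, b3, b4, b5, b6, b7⟩ := ih
  exact ⟨b3, b4, a4, a5, b5, b6, b7, a8⟩
end

section
/- Define real sequences (T_n), (M_n), (t_n), (m_n) for n ≥ 1 by: T_1 = 1, M_1 = 2, t_1 = 1, m_1 = 1, and for n ≥ 1, with α_n := 1/(n+1), set T_{n+1} := min(T_n + M_n, t_n + m_n), t_{n+1} := max(T_n + M_n, t_n + m_n), M_{n+1} := α_n·(1 + T_{n+1}), m_{n+1} := α_{n+1}·(1 + t_{n+1}). Then lim_{n→∞} m_n = lim_{n→∞} M_n = √2. -/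
open Filter Topology

/-- Asymptotics of the Riemann-problem sequences:
with `T₁ = t₁ = 1`, `M₁ = 2`, `m₁ = 1`, `α_n = 1/(n+1)`,
`T_{n+1} = min(T_n + M_n, t_n + m_n)`, `t_{n+1} = max(T_n + M_n, t_n + m_n)`,
`M_{n+1} = α_n (1 + T_{n+1})`, `m_{n+1} = α_{n+1} (1 + t_{n+1})`,
both `m_n` and `M_n` converge to `√2`. -/
theorem mancala_riemann_sequences_limit
    (T M t m : ℕ → ℝ)
    (hT1 : T 1 = 1) (hM1 : M 1 = 2) (ht1 : t 1 = 1) (hm1 : m 1 = 1)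
    (hT : ∀ n ≥ 1, T (n + 1) = min (T n + M n) (t n + m n))
    (ht : ∀ n ≥ 1, t (n + 1) = max (T n + M n) (t n + m n))
    (hM : ∀ n ≥ 1, M (n + 1) = (1 / ((n : ℝ) + 1)) * (1 + T (n + 1)))
    (hm : ∀ n ≥ 1, m (n + 1) = (1 / ((n : ℝ) + 2)) * (1 + t (n + 1))) :
    Tendsto m atTop (𝓝 (Real.sqrt 2)) ∧
    Tendsto M atTop (𝓝 (Real.sqrt 2)) := by
  have key : ∀ n : ℕ, 1 ≤ n → 0 < m n ∧ M n * m n = 2 ∧ m n ≤ M n ∧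
      (n : ℝ) * M n ≤ (n + 1) * m n ∧ T n = n * M n - 1 ∧ t n = (n + 1) * m n - 1 := by
    intro n hn
    induction n, hn using Nat.le_induction with
    | base => rw [hT1, hM1, ht1, hm1]; norm_num
    | succ n hn ih =>
      obtain ⟨h0, h1, h2, h3, h4, h5⟩ := ih
      have hx : (1 : ℝ) ≤ n := by exact_mod_cast hn
      have eT := hT n hn
      have et := ht n hn
      have eM := hM n hn
      have em := hm n hn
      have a1 : T n + M n = (n + 1) * M n - 1 := by rw [h4]; ring
      have a2 : t n + m n = (n + 2) * m n - 1 := by rw [h5]; ring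
      rw [a1, a2] at eT et
      push_cast
      generalize (n : ℝ) = x at *
      have p1 : 0 < x + 1 := by linarith
      have p2 : 0 < x + 2 := by linarith
      have q1 : T (n + 1) = (x + 1) * M (n + 1) - 1 := by rw [eM]; field_simp; ring
      have q2 : t (n + 1) = (x + 1 + 1) * m (n + 1) - 1 := by rw [em]; field_simp; ring
      rcases le_or_gt ((x + 1) * M n) ((x + 2) * m n) with h | h
      · rw [min_eq_left (by linarith)] at eT
        rw [max_eq_right (by linarith)] at et
        have r1 : M (n + 1) = M n := by rw [eM, eT]; field_simp; ring
        have r2 : m (n + 1) = m n := by rw [em, et]; field_simp; ring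
        refine ⟨?_, ?_, ?_, ?_, q1, q2⟩ <;> rw [r2] <;> try rw [r1]
        all_goals linarith
      · rw [min_eq_right (by linarith)] at eT
        rw [max_eq_left (by linarith)] at et
        have r1 : M (n + 1) = (x + 2) * m n / (x + 1) := by rw [eM, eT]; field_simp; ring
        have r2 : m (n + 1) = (x + 1) * M n / (x + 2) := by rw [em, et]; field_simp; ring
        have hMp : 0 < M n := by linarith
        refine ⟨?_, ?_, ?_, ?_, q1, q2⟩
        · rw [r2]; positivity
        · rw [r1, r2, ← h1]; field_simp
        · rw [r1, r2, div_le_div_iff₀ p2 p1]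
          have : x * ((x + 1) ^ 2 * M n) ≤ x * ((x + 2) ^ 2 * m n) := by
            have u1 : (x + 1) ^ 2 * (x * M n) ≤ (x + 1) ^ 2 * ((x + 1) * m n) := by gcongr
            have u2 : 0 ≤ (x ^ 2 + x - 1) * m n := by
              apply mul_nonneg _ h0.le; nlinarith
            nlinarith
          have := le_of_mul_le_mul_left this (by linarith)
          nlinarith
        · have s1 : (x + 1) * M (n + 1) = (x + 2) * m n := by rw [r1]; field_simp
          have s2 : (x + 1 + 1) * m (n + 1) = (x + 1) * M n := by
            rw [r2]; field_simp; ring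
          rw [s1, s2]; exact h.le
  have hlim : Tendsto (fun n : ℕ => (2 : ℝ) + 2 / n) atTop (𝓝 2) := by
    simpa using (tendsto_const_div_atTop_nhds_zero_nat (2 : ℝ)).const_add 2
  have hsq : Tendsto (fun n => M n ^ 2) atTop (𝓝 2) := by
    refine tendsto_of_tendsto_of_tendsto_of_le_of_le' tendsto_const_nhds hlim ?_ ?_
    · filter_upwards [eventually_ge_atTop 1] with n hn
      obtain ⟨h0, h1, h2, -⟩ := key n hn
      nlinarith
    · filter_upwards [eventually_ge_atTop 1] with n hn
      obtain ⟨h0, h1, h2, h3, -⟩ := key n hn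
      have hx : (0 : ℝ) < n := by exact_mod_cast hn
      have : (2 : ℝ) + 2 / n = (2 * n + 2) / n := by field_simp
      rw [this, le_div_iff₀ hx]
      have := mul_le_mul_of_nonneg_left h3 (h0.le.trans h2)
      nlinarith
  have hMl : Tendsto M atTop (𝓝 (Real.sqrt 2)) := by
    refine (hsq.sqrt).congr' ?_
    filter_upwards [eventually_ge_atTop 1] with n hn
    obtain ⟨h0, h1, h2, -⟩ := key n hn
    exact Real.sqrt_sq (h0.le.trans h2)
  refine ⟨?_, hMl⟩
  have hd : Tendsto (fun n => 2 / M n) atTop (𝓝 (2 / Real.sqrt 2)) :=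
    tendsto_const_nhds.div hMl (by positivity)
  rw [Real.div_sqrt] at hd
  refine hd.congr' ?_
  filter_upwards [eventually_ge_atTop 1] with n hn
  obtain ⟨h0, h1, h2, -⟩ := key n hn
  rw [div_eq_iff (by linarith)]; linarith
end
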